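/- There exists an absolute constant $c>0$ such that for every $n\ge 1$, every arrangement $\mathcal H=\{H_1,\dots,H_n\}$ of $n$ affine hyperplanes in general position in $\mathbb R^3$ (the intersection of any $k\le 3$ of them is an affine subspace of dimension $3-k$, and no $4$ of them have a common point) and every $\varepsilon\in(0,1)$, the following holds. Let $G$ be the chamber graph of $\mathcal H$: its vertices are the connected components (chambers) of $\mathbb R^3\setminus\bigcup_i H_i$, and two chambers are adjacent iff they share a common facet. The lazy simple random walk on $G$, with transition matrix $P=\tfrac12(I+D^{-1}A)$, where $A$ and $D$ are the adjacency and the diagonal degree matrix of $G$, and with stationary distribution $\pi(v)\propto\deg(v)$, has $\varepsilon$-mixing time $$t_{\mathrm{mix}}(\varepsilon):=\min\{t\in\mathbb Z_{\ge 0}:\max_x\|P^t(x,\cdot)-\pi\|_{\mathrm{TV}}\le\varepsilon\}\;\le\; c\,n^2\log\frac{n}{\varepsilon}.$$ -/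

import Mathlib

noncomputable section

/-- A family of `n` affine hyperplanes in Euclidean `d`-space, the `i`-th one being
`{x | ⟪normal i, x⟫ = offset i}`. -/
structure Arrangement (d n : ℕ) where
  normal : Fin n → EuclideanSpace ℝ (Fin d)
  offset : Fin n → ℝ
  normal_ne_zero : ∀ i, normal i ≠ 0

namespace Arrangement

variable {d n : ℕ} (𝓗 : Arrangement d n)

/-- The `i`-th hyperplane, as an affine subspace. -/
def hyperplane (i : Fin n) : AffineSubspace ℝ (EuclideanSpace ℝ (Fin d)) where
  carrier := {x | inner ℝ (𝓗.normal i) x = 𝓗.offset i}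
  smul_vsub_vadd_mem' := by
    intro c p₁ p₂ p₃ h₁ h₂ h₃
    simp only [Set.mem_ofPred_eq] at h₁ h₂ h₃ ⊢
    simp [inner_add_right, inner_smul_right, inner_sub_right, h₁, h₂, h₃]

/-- General position: any `k ≤ d` of the hyperplanes meet in a (nonempty) affine subspace of
dimension `d - k`, and no `d + 1` of them have a common point. For `d ≥ 1` this makes the
hyperplanes pairwise distinct. -/
def GeneralPosition : Prop :=
  (∀ A : Finset (Fin n), A.card ≤ d →
    ((⨅ i ∈ A, 𝓗.hyperplane i : AffineSubspace ℝ (EuclideanSpace ℝ (Fin d))) :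
      Set (EuclideanSpace ℝ (Fin d))).Nonempty ∧
    Module.finrank ℝ (⨅ i ∈ A, 𝓗.hyperplane i :
      AffineSubspace ℝ (EuclideanSpace ℝ (Fin d))).direction = d - A.card) ∧
  (∀ A : Finset (Fin n), A.card = d + 1 →
    ¬ ∃ x : EuclideanSpace ℝ (Fin d), ∀ i ∈ A, x ∈ 𝓗.hyperplane i)

/-- The complement of the union of the hyperplanes. -/
def complement : Set (EuclideanSpace ℝ (Fin d)) :=
  (⋃ i, (𝓗.hyperplane i : Set (EuclideanSpace ℝ (Fin d))))ᶜ

/-- The chambers: the connected components of the complement of the hyperplanes. -/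
def chambers : Set (Set (EuclideanSpace ℝ (Fin d))) :=
  {C | ∃ x ∈ 𝓗.complement, C = connectedComponentIn 𝓗.complement x}

/-- `F` is a facet of the chamber `C`: it is the part of the closure of `C` on one of the
hyperplanes, and it has full dimension in that hyperplane. -/
def IsFacet (F C : Set (EuclideanSpace ℝ (Fin d))) : Prop :=
  ∃ i, F = closure C ∩ (𝓗.hyperplane i : Set (EuclideanSpace ℝ (Fin d))) ∧
    affineSpan ℝ F = 𝓗.hyperplane i

/-- The chamber graph: distinct chambers are adjacent iff they share a common facet. -/
def chamberGraph : SimpleGraph 𝓗.chambers where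
  Adj C C' := C ≠ C' ∧ ∃ F, 𝓗.IsFacet F C ∧ 𝓗.IsFacet F C'
  symm := ⟨fun _ _ h => ⟨h.1.symm, h.2.imp fun _ hF => hF.symm⟩⟩
  loopless := ⟨fun _ h => h.1 rfl⟩

/-- There are finitely many chambers. -/
theorem finite_chambers : Finite 𝓗.chambers := by
  classical
  let f : 𝓗.chambers → (Fin n → Prop) := fun C i =>
    𝓗.offset i < inner ℝ (𝓗.normal i) C.2.choose
  refine Finite.of_injective f ?_
  intro C C' h
  have hx := C.2.choose_spec
  have hy := C'.2.choose_spec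
  set x := C.2.choose with hxdef
  set y := C'.2.choose with hydef
  apply Subtype.ext
  rw [hx.2, hy.2]
  have hseg : segment ℝ x y ⊆ 𝓗.complement := by
    intro z hz hz'
    obtain ⟨a, b, ha, hb, hab, rfl⟩ := hz
    obtain ⟨i, hi⟩ := Set.mem_iUnion.1 hz'
    have hi' : inner ℝ (𝓗.normal i) (a • x + b • y) = 𝓗.offset i := hi
    rw [inner_add_right, inner_smul_right, inner_smul_right] at hi'
    have hxi : inner ℝ (𝓗.normal i) x ≠ 𝓗.offset i :=
      fun e => hx.1 (Set.mem_iUnion.2 ⟨i, e⟩)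
    have hyi : inner ℝ (𝓗.normal i) y ≠ 𝓗.offset i :=
      fun e => hy.1 (Set.mem_iUnion.2 ⟨i, e⟩)
    have hi2 : (𝓗.offset i < inner ℝ (𝓗.normal i) x) =
      (𝓗.offset i < inner ℝ (𝓗.normal i) y) := congrFun h i
    have hb' : b = 1 - a := by linarith
    subst hb'
    by_cases hlt : 𝓗.offset i < inner ℝ (𝓗.normal i) x
    · have hlt' : 𝓗.offset i < inner ℝ (𝓗.normal i) y := hi2 ▸ hlt
      rcases ha.eq_or_lt with rfl | ha
      · apply hyi; linarith
      · nlinarith [mul_pos ha (sub_pos.2 hlt), mul_nonneg hb (sub_pos.2 hlt').le]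
    · have hlt' : ¬ 𝓗.offset i < inner ℝ (𝓗.normal i) y := hi2 ▸ hlt
      have h1 := lt_of_le_of_ne (not_lt.1 hlt) hxi
      have h2 := lt_of_le_of_ne (not_lt.1 hlt') hyi
      rcases ha.eq_or_lt with rfl | ha
      · apply hyi; linarith
      · nlinarith [mul_pos ha (sub_pos.2 h1), mul_nonneg hb (sub_pos.2 h2).le]
  exact connectedComponentIn_eq
    ((convex_segment x y).isPreconnected.subset_connectedComponentIn
      (left_mem_segment ℝ x y) hseg (right_mem_segment ℝ x y))

instance instFintypeChambers : Fintype 𝓗.chambers :=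
  letI := 𝓗.finite_chambers
  Fintype.ofFinite _

end Arrangement

section RandomWalk

open scoped Classical

variable {V : Type*} [Fintype V] (G : SimpleGraph V)

/-- The transition matrix `P = (I + D⁻¹ A) / 2` of the lazy simple random walk on a finite graph
without isolated vertices. -/
def lazyWalk : Matrix V V ℝ :=
  (1 / 2 : ℝ) • (1 + Matrix.diagonal (fun v => (G.degree v : ℝ)⁻¹) * G.adjMatrix ℝ)

/-- The stationary distribution `π(v) = deg(v) / ∑ w, deg(w)`. -/
def stationary (v : V) : ℝ := (G.degree v : ℝ) / ∑ w, (G.degree w : ℝ)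

/-- The total variation distance of two probability vectors on a finite set. -/
def tvDist (μ ν : V → ℝ) : ℝ := (1 / 2) * ∑ v, |μ v - ν v|

/-- `t` is the `ε`-mixing time of the lazy simple random walk on `G`: the least `t` with
`max_x ‖P^t(x, ·) - π‖_TV ≤ ε`. -/
def IsMixingTime (ε : ℝ) (t : ℕ) : Prop :=
  IsLeast {s : ℕ | ∀ x, tvDist ((lazyWalk G ^ s) x) (stationary G) ≤ ε} t

end RandomWalk

end

noncomputable section

open Topology

/-- The real sign `±1` of a Boolean. -/
def boolSign (b : Bool) : ℝ := if b then 1 else -1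

@[simp] theorem boolSign_true : boolSign true = 1 := rfl

@[simp] theorem boolSign_false : boolSign false = -1 := rfl

theorem boolSign_not (b : Bool) : boolSign (!b) = -boolSign b := by cases b <;> simp

theorem boolSign_ne_zero (b : Bool) : boolSign b ≠ 0 := by cases b <;> simp

/-- Change the `k`-th entry of a sign vector. -/
def flipAt {n : ℕ} (σ : Fin n → Bool) (k : Fin n) : Fin n → Bool := Function.update σ k (!σ k)

theorem flipAt_self {n : ℕ} (σ : Fin n → Bool) (k : Fin n) : flipAt σ k k = !σ k := by
  simp [flipAt]

theorem flipAt_of_ne {n : ℕ} (σ : Fin n → Bool) {k i : Fin n} (h : i ≠ k) :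
    flipAt σ k i = σ i := by
  simp [flipAt, h]

namespace Arrangement

variable {d n : ℕ} (𝓗 : Arrangement d n)

/-- The affine form whose zero set is the `i`-th hyperplane. -/
def form (i : Fin n) (x : EuclideanSpace ℝ (Fin d)) : ℝ :=
  inner ℝ (𝓗.normal i) x - 𝓗.offset i

theorem mem_hyperplane_iff {i : Fin n} {x : EuclideanSpace ℝ (Fin d)} :
    x ∈ 𝓗.hyperplane i ↔ 𝓗.form i x = 0 := by
  rw [form, sub_eq_zero]; rfl

theorem continuous_form (i : Fin n) : Continuous (𝓗.form i) := by
  unfold form; fun_prop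

theorem form_add_smul (i : Fin n) (x v : EuclideanSpace ℝ (Fin d)) (t : ℝ) :
    𝓗.form i (x + t • v) = 𝓗.form i x + t * inner ℝ (𝓗.normal i) v := by
  simp [form, inner_add_right, inner_smul_right]; ring

theorem form_add (i : Fin n) (x v : EuclideanSpace ℝ (Fin d)) :
    𝓗.form i (x + v) = 𝓗.form i x + inner ℝ (𝓗.normal i) v := by
  simp [form, inner_add_right]; ring

theorem inner_normal_sub (i : Fin n) (x y : EuclideanSpace ℝ (Fin d)) :
    inner ℝ (𝓗.normal i) (x - y) = 𝓗.form i x - 𝓗.form i y := by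
  simp [form, inner_sub_right]

theorem form_combo (i : Fin n) (x y : EuclideanSpace ℝ (Fin d)) {a b : ℝ} (hab : a + b = 1) :
    𝓗.form i (a • x + b • y) = a * 𝓗.form i x + b * 𝓗.form i y := by
  have : a = 1 - b := by linarith
  subst this
  simp [form, inner_add_right, inner_smul_right]; ring

theorem mem_complement_iff {x : EuclideanSpace ℝ (Fin d)} :
    x ∈ 𝓗.complement ↔ ∀ i, 𝓗.form i x ≠ 0 := by
  simp [complement, mem_hyperplane_iff]

/-- The open cell on which the affine forms have the prescribed signs. -/
def cell (σ : Fin n → Bool) : Set (EuclideanSpace ℝ (Fin d)) :=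
  {x | ∀ i, 0 < boolSign (σ i) * 𝓗.form i x}

/-- The sign vector of a point. -/
def signs (x : EuclideanSpace ℝ (Fin d)) (i : Fin n) : Bool := decide (0 < 𝓗.form i x)

theorem boolSign_signs_mul_pos {x : EuclideanSpace ℝ (Fin d)} {i : Fin n}
    (h : 𝓗.form i x ≠ 0) : 0 < boolSign (𝓗.signs x i) * 𝓗.form i x := by
  unfold signs
  rcases lt_or_gt_of_ne h with h | h
  · simp [h.le.not_gt, h]
  · simp [h]

theorem signs_eq_of_pos {x : EuclideanSpace ℝ (Fin d)} {i : Fin n} {b : Bool}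
    (h : 0 < boolSign b * 𝓗.form i x) : 𝓗.signs x i = b := by
  unfold signs
  cases b
  · simp at h; simp [h.le]
  · simpa using h

theorem mem_cell_signs {x : EuclideanSpace ℝ (Fin d)} (hx : x ∈ 𝓗.complement) :
    x ∈ 𝓗.cell (𝓗.signs x) :=
  fun i => 𝓗.boolSign_signs_mul_pos (𝓗.mem_complement_iff.1 hx i)

theorem signs_eq_of_mem_cell {x : EuclideanSpace ℝ (Fin d)} {σ : Fin n → Bool}
    (hx : x ∈ 𝓗.cell σ) : 𝓗.signs x = σ :=
  funext fun i => 𝓗.signs_eq_of_pos (hx i)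

theorem cell_subset_complement (σ : Fin n → Bool) : 𝓗.cell σ ⊆ 𝓗.complement := by
  intro x hx
  rw [mem_complement_iff]
  intro i hi
  simpa [hi] using hx i

theorem convex_cell (σ : Fin n → Bool) : Convex ℝ (𝓗.cell σ) := by
  intro x hx y hy a b ha hb hab i
  rw [𝓗.form_combo i x y hab]
  have h1 := hx i
  have h2 := hy i
  rcases ha.eq_or_lt with rfl | ha
  · have : b = 1 := by linarith
    simpa [this] using h2
  · nlinarith [mul_pos ha h1, mul_nonneg hb h2.le]

theorem connectedComponentIn_eq_cell {x : EuclideanSpace ℝ (Fin d)} {σ : Fin n → Bool}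
    (hx : x ∈ 𝓗.cell σ) : connectedComponentIn 𝓗.complement x = 𝓗.cell σ := by
  have hxc := 𝓗.cell_subset_complement σ hx
  apply Set.Subset.antisymm
  · intro y hy i
    by_contra hneg
    have hsub := connectedComponentIn_subset 𝓗.complement x
    obtain ⟨z, hz, hz0⟩ := isPreconnected_connectedComponentIn.intermediate_value hy
      (mem_connectedComponentIn hxc)
      ((continuous_const.mul (𝓗.continuous_form i)).continuousOn
        (f := fun z => boolSign (σ i) * 𝓗.form i z)) ⟨not_lt.1 hneg, (hx i).le⟩
    exact mul_ne_zero (boolSign_ne_zero _) (𝓗.mem_complement_iff.1 (hsub hz) i) hz0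
  · exact (𝓗.convex_cell σ).isPreconnected.subset_connectedComponentIn hx
      (𝓗.cell_subset_complement σ)

/-- A sign vector is realizable if its cell is nonempty. -/
def Realizable (σ : Fin n → Bool) : Prop := (𝓗.cell σ).Nonempty

/-- The sign vector of a chamber. -/
def side (C : 𝓗.chambers) : Fin n → Bool := 𝓗.signs C.2.choose

theorem coe_eq_cell_side (C : 𝓗.chambers) : (C : Set _) = 𝓗.cell (𝓗.side C) := by
  have h := C.2.choose_spec
  rw [h.2]
  exact 𝓗.connectedComponentIn_eq_cell (𝓗.mem_cell_signs h.1)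

theorem realizable_side (C : 𝓗.chambers) : 𝓗.Realizable (𝓗.side C) :=
  ⟨_, 𝓗.mem_cell_signs C.2.choose_spec.1⟩

/-- The chamber with a given realizable sign vector. -/
def chamberOf {σ : Fin n → Bool} (h : 𝓗.Realizable σ) : 𝓗.chambers :=
  ⟨𝓗.cell σ, h.some, 𝓗.cell_subset_complement σ h.some_mem,
    (𝓗.connectedComponentIn_eq_cell h.some_mem).symm⟩

theorem side_injective : Function.Injective 𝓗.side := by
  intro C C' h
  apply Subtype.ext
  rw [coe_eq_cell_side, coe_eq_cell_side, h]

@[simp] theorem side_chamberOf {σ : Fin n → Bool} (h : 𝓗.Realizable σ) :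
    𝓗.side (𝓗.chamberOf h) = σ := by
  have hx := h.some_mem
  have h2 : h.some ∈ 𝓗.cell (𝓗.side (𝓗.chamberOf h)) := by
    rw [← coe_eq_cell_side]; exact hx
  exact (𝓗.signs_eq_of_mem_cell h2).symm.trans (𝓗.signs_eq_of_mem_cell hx)

theorem closure_cell {σ : Fin n → Bool} (h : 𝓗.Realizable σ) :
    closure (𝓗.cell σ) = {x | ∀ i, 0 ≤ boolSign (σ i) * 𝓗.form i x} := by
  apply Set.Subset.antisymm
  · apply closure_minimal
    · exact fun x hx i => (hx i).le
    · simp only [Set.ofPred_forall]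
      exact isClosed_iInter fun i =>
        isClosed_le continuous_const (continuous_const.mul (𝓗.continuous_form i))
  · intro x hx
    obtain ⟨y, hy⟩ := h
    have hlim : Filter.Tendsto (fun t : ℝ => (1 - t) • x + t • y) (𝓝[>] 0) (𝓝 x) := by
      have : Continuous (fun t : ℝ => (1 - t) • x + t • y) := by fun_prop
      have h0 := (this.tendsto 0).mono_left (nhdsWithin_le_nhds (s := Set.Ioi 0))
      simpa using h0
    refine mem_closure_of_tendsto hlim ?_
    filter_upwards [Ioo_mem_nhdsGT (zero_lt_one' ℝ)] with t ht i
    rw [𝓗.form_combo i x y (by ring)]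
    nlinarith [mul_pos ht.1 (hy i), mul_nonneg (sub_nonneg.2 ht.2.le) (hx i)]

/-- Crossing a common wall: if the cells of `σ` and `flipAt σ k` are both nonempty, there is a point
of the `k`-th hyperplane on the prescribed side of all other hyperplanes. -/
theorem exists_mem_wall {σ : Fin n → Bool} {k : Fin n} (h : 𝓗.Realizable σ)
    (h' : 𝓗.Realizable (flipAt σ k)) :
    ∃ z, 𝓗.form k z = 0 ∧ ∀ i, i ≠ k → 0 < boolSign (σ i) * 𝓗.form i z := by
  obtain ⟨x, hx⟩ := h
  obtain ⟨y, hy⟩ := h'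
  have hxk := hx k
  have hyk := hy k
  rw [flipAt_self, boolSign_not] at hyk
  set s := boolSign (σ k) with hs
  set p := s * 𝓗.form k x with hp
  set q := -s * 𝓗.form k y with hq
  have hpq : 0 < p + q := by linarith
  refine ⟨(q / (p + q)) • x + (p / (p + q)) • y, ?_, ?_⟩
  · rw [𝓗.form_combo k x y (by field_simp; ring)]
    have hs0 : s ≠ 0 := boolSign_ne_zero _
    apply mul_left_cancel₀ hs0
    have : s * (q / (p + q) * 𝓗.form k x + p / (p + q) * 𝓗.form k y)
        = (q * (s * 𝓗.form k x) - p * (-s * 𝓗.form k y)) / (p + q) := by field_simp; ring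
    rw [this, ← hp, ← hq]
    ring
  · intro i hi
    rw [𝓗.form_combo i x y (by field_simp; ring)]
    have h1 := hx i
    have h2 := hy i
    rw [flipAt_of_ne _ hi] at h2
    have e1 : 0 < q / (p + q) := by positivity
    have e2 : 0 < p / (p + q) := by positivity
    nlinarith [mul_pos e1 h1, mul_pos e2 h2]

theorem chamberGraph_adj_of_side_eq_flipAt {C C' : 𝓗.chambers} {k : Fin n}
    (h : 𝓗.side C' = flipAt (𝓗.side C) k) : 𝓗.chamberGraph.Adj C C' := by
  have hC := 𝓗.realizable_side C
  have hC' := 𝓗.realizable_side C'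
  have hne : C ≠ C' := by
    rintro rfl
    have := congrFun h k
    rw [flipAt_self] at this
    simp at this
  have hclos : closure (C' : Set (EuclideanSpace ℝ (Fin d))) ∩ 𝓗.hyperplane k
      = closure (C : Set (EuclideanSpace ℝ (Fin d))) ∩ 𝓗.hyperplane k := by
    rw [𝓗.coe_eq_cell_side C, 𝓗.coe_eq_cell_side C', 𝓗.closure_cell hC, 𝓗.closure_cell hC', h]
    ext x
    simp only [Set.mem_inter_iff, SetLike.mem_coe, mem_hyperplane_iff, Set.mem_ofPred_eq,
      and_congr_left_iff]
    intro hx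
    refine forall_congr' fun i => ?_
    by_cases hi : i = k
    · subst hi; simp [hx]
    · rw [flipAt_of_ne _ hi]
  have hspan : affineSpan ℝ (closure (C : Set (EuclideanSpace ℝ (Fin d))) ∩ 𝓗.hyperplane k)
      = 𝓗.hyperplane k := by
    apply le_antisymm
    · exact affineSpan_le.2 Set.inter_subset_right
    · intro q hq
      rw [h] at hC'
      obtain ⟨z, hz, hzs⟩ := 𝓗.exists_mem_wall hC hC'
      rw [mem_hyperplane_iff] at hq
      have hqk : ∀ t : ℝ, 𝓗.form k (z + t • (q - z)) = 0 := by
        intro t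
        rw [form_add_smul, inner_normal_sub, hz, hq]; ring
      have hev : ∀ᶠ t in 𝓝[>] (0 : ℝ), ∀ i, i ≠ k →
          0 < boolSign (𝓗.side C i) * 𝓗.form i (z + t • (q - z)) := by
        rw [Filter.eventually_all]
        intro i
        by_cases hi : i = k
        · simp [hi]
        · have hcont : Continuous fun t : ℝ =>
              boolSign (𝓗.side C i) * 𝓗.form i (z + t • (q - z)) :=
            continuous_const.mul ((𝓗.continuous_form i).comp (by fun_prop))
          have := (hcont.tendsto 0).mono_left (nhdsWithin_le_nhds (s := Set.Ioi 0))
          simp only [zero_smul, add_zero] at this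
          filter_upwards [this.eventually (lt_mem_nhds (hzs i hi))] with t ht _ using ht
      obtain ⟨t, ht, ht0⟩ := (hev.and self_mem_nhdsWithin).exists
      have ht0' : t ≠ 0 := ne_of_gt ht0
      set F := closure (C : Set (EuclideanSpace ℝ (Fin d))) ∩ 𝓗.hyperplane k with hF
      have hmem : ∀ w, 𝓗.form k w = 0 →
          (∀ i, i ≠ k → 0 < boolSign (𝓗.side C i) * 𝓗.form i w) → w ∈ F := by
        intro w hw hws
        refine ⟨?_, 𝓗.mem_hyperplane_iff.2 hw⟩
        rw [𝓗.coe_eq_cell_side C, 𝓗.closure_cell hC]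
        intro i
        by_cases hi : i = k
        · subst hi; simp [hw]
        · exact (hws i hi).le
      have hzF := subset_affineSpan ℝ F (hmem z hz hzs)
      have hwF := subset_affineSpan ℝ F (hmem _ (hqk t) ht)
      have := AffineSubspace.smul_vsub_vadd_mem (affineSpan ℝ F) t⁻¹ hwF hzF hzF
      convert this using 1
      simp [smul_smul, ht0']
  exact ⟨hne, _, ⟨k, rfl, hspan⟩, ⟨k, hclos.symm, hspan⟩⟩

theorem exists_side_eq_flipAt_of_adj (hinj : ∀ i j, 𝓗.hyperplane i ≤ 𝓗.hyperplane j → i = j)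
    {C C' : 𝓗.chambers} (h : 𝓗.chamberGraph.Adj C C') :
    ∃ k, 𝓗.side C' = flipAt (𝓗.side C) k := by
  obtain ⟨hne, F, ⟨k, hF, hspan⟩, ⟨k', hF', hspan'⟩⟩ := h
  obtain rfl : k = k' := hinj _ _ (hspan ▸ hspan' ▸ le_rfl)
  have hoff : ∀ i, i ≠ k → 𝓗.side C' i = 𝓗.side C i := by
    intro i hi
    by_contra hsi
    apply hi
    refine (hinj k i ?_).symm
    rw [← hspan]
    apply affineSpan_le.2
    intro x hx
    have h1 : x ∈ closure (C : Set (EuclideanSpace ℝ (Fin d))) := by rw [hF] at hx; exact hx.1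
    have h2 : x ∈ closure (C' : Set (EuclideanSpace ℝ (Fin d))) := by rw [hF'] at hx; exact hx.1
    rw [𝓗.coe_eq_cell_side C, 𝓗.closure_cell (𝓗.realizable_side C)] at h1
    rw [𝓗.coe_eq_cell_side C', 𝓗.closure_cell (𝓗.realizable_side C')] at h2
    have e : 𝓗.side C' i = !𝓗.side C i := by
      cases h3 : 𝓗.side C' i <;> cases h4 : 𝓗.side C i <;> simp_all
    have h1 := h1 i
    have h2 := h2 i
    rw [e, boolSign_not] at h2
    have h0 : boolSign (𝓗.side C i) * 𝓗.form i x = 0 := by linarith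
    exact 𝓗.mem_hyperplane_iff.2 ((mul_eq_zero.1 h0).resolve_left (boolSign_ne_zero _))
  refine ⟨k, funext fun i => ?_⟩
  by_cases hi : i = k
  · subst hi
    rw [flipAt_self]
    by_contra hsi
    apply hne
    apply 𝓗.side_injective
    funext j
    by_cases hj : j = i
    · subst hj
      cases h3 : 𝓗.side C' j <;> cases h4 : 𝓗.side C j <;> simp_all
    · exact (hoff j hj).symm
  · rw [flipAt_of_ne _ hi, hoff i hi]

end Arrangement
end

noncomputable section

open Topology

namespace Arrangement

variable {d n : ℕ} (𝓗 : Arrangement d n)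

/-- The vectors orthogonal to the normals indexed by `A`. -/
def commonKernel (A : Finset (Fin n)) : Submodule ℝ (EuclideanSpace ℝ (Fin d)) :=
  LinearMap.ker (LinearMap.pi fun i : A => (innerₛₗ ℝ (𝓗.normal i)))

theorem mem_commonKernel {A : Finset (Fin n)} {v : EuclideanSpace ℝ (Fin d)} :
    v ∈ 𝓗.commonKernel A ↔ ∀ i ∈ A, inner ℝ (𝓗.normal i) v = 0 := by
  simp [commonKernel, funext_iff]

variable {𝓗}

theorem GeneralPosition.exists_common_point (hg : 𝓗.GeneralPosition) {A : Finset (Fin n)}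
    (hA : A.card ≤ d) : ∃ x, ∀ i ∈ A, 𝓗.form i x = 0 := by
  obtain ⟨x, hx⟩ := (hg.1 A hA).1
  refine ⟨x, fun i hi => ?_⟩
  rw [SetLike.mem_coe] at hx
  simp only [AffineSubspace.mem_iInf_iff] at hx
  exact 𝓗.mem_hyperplane_iff.1 (hx i hi)

theorem GeneralPosition.finrank_commonKernel (hg : 𝓗.GeneralPosition) {A : Finset (Fin n)}
    (hA : A.card ≤ d) : Module.finrank ℝ (𝓗.commonKernel A) = d - A.card := by
  obtain ⟨x, hx⟩ := (hg.1 A hA).1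
  rw [← (hg.1 A hA).2]
  rw [SetLike.mem_coe] at hx
  suffices h : 𝓗.commonKernel A = (⨅ i ∈ A, 𝓗.hyperplane i).direction by rw [h]
  ext v
  rw [← AffineSubspace.vadd_mem_iff_mem_direction v hx, mem_commonKernel]
  simp only [AffineSubspace.mem_iInf_iff, mem_hyperplane_iff] at hx ⊢
  refine forall₂_congr fun i hi => ?_
  rw [vadd_eq_add, add_comm, form_add, hx i hi, zero_add]

/-- Independence of at most `d` normals: the values of the linear forms can be prescribed. -/
theorem GeneralPosition.exists_inner_eq (hg : 𝓗.GeneralPosition) {A : Finset (Fin n)}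
    (hA : A.card ≤ d) (c : Fin n → ℝ) : ∃ w, ∀ i ∈ A, inner ℝ (𝓗.normal i) w = c i := by
  set L := LinearMap.pi fun i : A => (innerₛₗ ℝ (𝓗.normal i)) with hL
  have h1 := hg.finrank_commonKernel hA
  have h2 := LinearMap.finrank_range_add_finrank_ker L
  have h3 : Module.finrank ℝ (LinearMap.ker L) = d - A.card := h1
  have htop : LinearMap.range L = ⊤ := by
    apply Submodule.eq_top_of_finrank_eq
    simp at h2 ⊢
    omega
  obtain ⟨w, hw⟩ := LinearMap.range_eq_top.1 htop (fun i => c i)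
  refine ⟨w, fun i hi => ?_⟩
  have := congrFun hw ⟨i, hi⟩
  simpa [hL] using this

theorem GeneralPosition.card_le_of_form_eq_zero (hg : 𝓗.GeneralPosition) {A : Finset (Fin n)}
    {x : EuclideanSpace ℝ (Fin d)} (h : ∀ i ∈ A, 𝓗.form i x = 0) : A.card ≤ d := by
  by_contra hA
  obtain ⟨B, hB, hBc⟩ := Finset.exists_subset_card_eq (show d + 1 ≤ A.card by omega)
  exact hg.2 B hBc ⟨x, fun i hi => 𝓗.mem_hyperplane_iff.2 (h i (hB hi))⟩

theorem GeneralPosition.form_ne_zero (hg : 𝓗.GeneralPosition) {S : Finset (Fin n)}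
    (hS : S.card = d) {x : EuclideanSpace ℝ (Fin d)} (h : ∀ i ∈ S, 𝓗.form i x = 0)
    {l : Fin n} (hl : l ∉ S) : 𝓗.form l x ≠ 0 := by
  intro hlx
  have := hg.card_le_of_form_eq_zero (A := insert l S) (x := x) (by
    intro i hi
    rcases Finset.mem_insert.1 hi with rfl | hi
    · exact hlx
    · exact h i hi)
  rw [Finset.card_insert_of_notMem hl] at this
  omega

theorem GeneralPosition.eq_zero_of_orthogonal (hg : 𝓗.GeneralPosition) {S : Finset (Fin n)}
    (hS : S.card = d) {v : EuclideanSpace ℝ (Fin d)}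
    (h : ∀ i ∈ S, inner ℝ (𝓗.normal i) v = 0) : v = 0 := by
  have h1 := hg.finrank_commonKernel hS.le
  rw [hS, Nat.sub_self, Submodule.finrank_eq_zero] at h1
  have : v ∈ 𝓗.commonKernel S := 𝓗.mem_commonKernel.2 h
  simpa [h1] using this

theorem GeneralPosition.eq_of_hyperplane_le (hg : 𝓗.GeneralPosition) (hd : 2 ≤ d) (i j : Fin n)
    (h : 𝓗.hyperplane i ≤ 𝓗.hyperplane j) : i = j := by
  by_contra hij
  have hc : ({i, j} : Finset (Fin n)).card ≤ d := (Finset.card_pair hij).trans_le hd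
  obtain ⟨x, hx⟩ := hg.exists_common_point hc
  obtain ⟨w, hw⟩ := hg.exists_inner_eq hc (fun l => if l = j then 1 else 0)
  have hwi := hw i (by simp)
  have hwj := hw j (by simp)
  have hxi := hx i (by simp)
  have hxj := hx j (by simp)
  have := 𝓗.mem_hyperplane_iff.1 (h (𝓗.mem_hyperplane_iff.2
    (show 𝓗.form i (x + w) = 0 by rw [form_add, hxi, hwi]; simp [hij])))
  rw [form_add, hxj, hwj] at this
  simp at this

/-- Near a point lying on exactly the hyperplanes indexed by `S`, all sign patterns on `S` occur. -/
theorem GeneralPosition.realizable_piecewise (hg : 𝓗.GeneralPosition) {S : Finset (Fin n)}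
    (hS : S.card ≤ d) {x : EuclideanSpace ℝ (Fin d)} (h : ∀ i ∈ S, 𝓗.form i x = 0)
    (h' : ∀ i ∉ S, 𝓗.form i x ≠ 0) (s : Fin n → Bool) :
    𝓗.Realizable (S.piecewise s (𝓗.signs x)) := by
  obtain ⟨w, hw⟩ := hg.exists_inner_eq hS (fun i => boolSign (s i))
  have hev : ∀ᶠ t in 𝓝[>] (0 : ℝ), ∀ i, i ∉ S →
      0 < boolSign (𝓗.signs x i) * 𝓗.form i (x + t • w) := by
    rw [Filter.eventually_all]
    intro i
    by_cases hi : i ∈ S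
    · simp [hi]
    · have hcont : Continuous fun t : ℝ => boolSign (𝓗.signs x i) * 𝓗.form i (x + t • w) :=
        continuous_const.mul ((𝓗.continuous_form i).comp (by fun_prop))
      have := (hcont.tendsto 0).mono_left (nhdsWithin_le_nhds (s := Set.Ioi 0))
      simp only [zero_smul, add_zero] at this
      filter_upwards [this.eventually (lt_mem_nhds (𝓗.boolSign_signs_mul_pos (h' i hi)))]
        with t ht _ using ht
  obtain ⟨t, ht, ht0⟩ := (hev.and self_mem_nhdsWithin).exists
  have ht0' : (0 : ℝ) < t := ht0
  refine ⟨x + t • w, fun i => ?_⟩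
  by_cases hi : i ∈ S
  · rw [Finset.piecewise_eq_of_mem _ _ _ hi, form_add_smul, h i hi, hw i hi]
    have : boolSign (s i) * boolSign (s i) = 1 := by cases s i <;> simp
    calc (0 : ℝ) < t * 1 := by linarith
      _ = boolSign (s i) * (0 + t * boolSign (s i)) := by rw [← this]; ring
  · rw [Finset.piecewise_eq_of_notMem _ _ _ hi]
    exact ht i hi

/-- One step of the walk to a vertex inside the closure of a cell. -/
theorem GeneralPosition.exists_insert_of_weak (hg : 𝓗.GeneralPosition) {S : Finset (Fin n)}
    (hS : S.card < d) (hSn : S.card < n) {σ : Fin n → Bool} {x : EuclideanSpace ℝ (Fin d)}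
    (h : ∀ i ∈ S, 𝓗.form i x = 0) (hx : ∀ i, 0 ≤ boolSign (σ i) * 𝓗.form i x) :
    ∃ l ∉ S, ∃ y, (∀ i ∈ insert l S, 𝓗.form i y = 0) ∧
      ∀ i, 0 ≤ boolSign (σ i) * 𝓗.form i y := by
  obtain ⟨k, hk⟩ : ∃ k, k ∉ S := by
    by_contra hall
    push Not at hall
    have : S = Finset.univ := Finset.eq_univ_iff_forall.2 hall
    simp [this] at hSn
  have hc : (insert k S).card ≤ d := by rw [Finset.card_insert_of_notMem hk]; omega
  obtain ⟨u, hu⟩ := hg.exists_inner_eq hc (fun i => if i = k then -boolSign (σ k) else 0)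
  set a : Fin n → ℝ := fun i => -(boolSign (σ i) * inner ℝ (𝓗.normal i) u) with ha
  set b : Fin n → ℝ := fun i => boolSign (σ i) * 𝓗.form i x with hb
  have huS : ∀ i ∈ S, inner ℝ (𝓗.normal i) u = 0 := by
    intro i hi
    rw [hu i (Finset.mem_insert_of_mem hi), if_neg]
    rintro rfl
    exact hk hi
  have hak : 0 < a k := by
    simp only [ha, hu k (Finset.mem_insert_self _ _), if_true]
    cases σ k <;> simp
  obtain ⟨l, hl, hmin⟩ := Finset.exists_min_image (Finset.univ.filter fun i => 0 < a i)
    (fun i => b i / a i) ⟨k, by simp [hak]⟩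
  have hal : 0 < a l := by simpa using hl
  have hlS : l ∉ S := by
    intro hlS
    simp [ha, huS l hlS] at hal
  set t := b l / a l with ht
  have ht0 : 0 ≤ t := div_nonneg (hx l) hal.le
  have key : ∀ i, boolSign (σ i) * 𝓗.form i (x + t • u) = b i - t * a i := by
    intro i
    rw [form_add_smul]
    simp only [ha, hb]
    ring
  refine ⟨l, hlS, x + t • u, ?_, ?_⟩
  · intro i hi
    rcases Finset.mem_insert.1 hi with rfl | hi
    · have := key i
      rw [ht, div_mul_cancel₀ _ hal.ne', sub_self] at this
      exact (mul_eq_zero.1 this).resolve_left (boolSign_ne_zero _)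
    · rw [form_add_smul, h i hi, huS i hi]; ring
  · intro i
    rw [key]
    by_cases hai : 0 < a i
    · have := hmin i (by simp [hai])
      rw [le_div_iff₀ hai] at this
      linarith
    · have : b i = boolSign (σ i) * 𝓗.form i x := rfl
      nlinarith [hx i, mul_nonneg ht0 (sub_nonneg.2 (not_lt.1 hai))]

theorem GeneralPosition.exists_vertex_of_weak (hg : 𝓗.GeneralPosition) (hn : d ≤ n)
    {σ : Fin n → Bool} (m : ℕ) : ∀ (S : Finset (Fin n)), S.card + m = d →
    ∀ x : EuclideanSpace ℝ (Fin d), (∀ i ∈ S, 𝓗.form i x = 0) →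
    (∀ i, 0 ≤ boolSign (σ i) * 𝓗.form i x) →
    ∃ S', S ⊆ S' ∧ S'.card = d ∧ ∃ y, (∀ i ∈ S', 𝓗.form i y = 0) ∧
      ∀ i, 0 ≤ boolSign (σ i) * 𝓗.form i y := by
  induction m with
  | zero => exact fun S hS x h hx => ⟨S, subset_rfl, hS, x, h, hx⟩
  | succ m ih =>
    intro S hS x h hx
    obtain ⟨l, hl, y, hy, hy'⟩ := hg.exists_insert_of_weak (by omega) (by omega) h hx
    obtain ⟨S', hSS', rest⟩ := ih (insert l S)
      (by rw [Finset.card_insert_of_notMem hl]; omega) y hy hy'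
    exact ⟨S', (Finset.subset_insert _ _).trans hSS', rest⟩

theorem GeneralPosition.vertex_unique (hg : 𝓗.GeneralPosition) {S : Finset (Fin n)}
    (hS : S.card = d) {x y : EuclideanSpace ℝ (Fin d)} (hx : ∀ i ∈ S, 𝓗.form i x = 0)
    (hy : ∀ i ∈ S, 𝓗.form i y = 0) : x = y := by
  rw [← sub_eq_zero]
  apply hg.eq_zero_of_orthogonal hS
  intro i hi
  rw [inner_normal_sub, hx i hi, hy i hi, sub_self]

variable (𝓗) in
/-- The common point of the hyperplanes indexed by `S` (a junk point if there is none). -/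
def vertex (S : Finset (Fin n)) : EuclideanSpace ℝ (Fin d) :=
  Classical.epsilon fun x => ∀ i ∈ S, 𝓗.form i x = 0

theorem GeneralPosition.form_vertex (hg : 𝓗.GeneralPosition) {S : Finset (Fin n)}
    (hS : S.card = d) : ∀ i ∈ S, 𝓗.form i (𝓗.vertex S) = 0 :=
  Classical.epsilon_spec (hg.exists_common_point hS.le)

theorem GeneralPosition.realizable_vertex (hg : 𝓗.GeneralPosition) {S : Finset (Fin n)}
    (hS : S.card = d) (s : Fin n → Bool) :
    𝓗.Realizable (S.piecewise s (𝓗.signs (𝓗.vertex S))) :=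
  hg.realizable_piecewise hS.le (hg.form_vertex hS)
    (fun _ hi => hg.form_ne_zero hS (hg.form_vertex hS) hi) s

theorem GeneralPosition.eq_signs_vertex_of_weak (hg : 𝓗.GeneralPosition) {S : Finset (Fin n)}
    (hS : S.card = d) {σ : Fin n → Bool} {y : EuclideanSpace ℝ (Fin d)}
    (hy : ∀ i ∈ S, 𝓗.form i y = 0) (hy' : ∀ i, 0 ≤ boolSign (σ i) * 𝓗.form i y)
    {l : Fin n} (hl : l ∉ S) : σ l = 𝓗.signs (𝓗.vertex S) l := by
  rw [← hg.vertex_unique hS hy (hg.form_vertex hS)]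
  refine (𝓗.signs_eq_of_pos (lt_of_le_of_ne (hy' l) ?_)).symm
  exact (mul_ne_zero (boolSign_ne_zero _) (hg.form_ne_zero hS hy hl)).symm

/-- Every wall of a cell has a vertex. -/
theorem GeneralPosition.exists_vertex_of_wall (hg : 𝓗.GeneralPosition) (hd : 1 ≤ d) (hn : d ≤ n)
    {σ : Fin n → Bool} {k : Fin n} (h : 𝓗.Realizable σ) (h' : 𝓗.Realizable (flipAt σ k)) :
    ∃ S : Finset (Fin n), k ∈ S ∧ S.card = d ∧ ∀ l ∉ S, σ l = 𝓗.signs (𝓗.vertex S) l := by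
  obtain ⟨z, hz, hzs⟩ := 𝓗.exists_mem_wall h h'
  obtain ⟨S, hkS, hS, y, hy, hy'⟩ := hg.exists_vertex_of_weak hn (σ := σ) (d - 1) {k}
    (by simp; omega) z (by simpa using hz) (by
      intro i
      by_cases hi : i = k
      · subst hi; simp [hz]
      · exact (hzs i hi).le)
  exact ⟨S, hkS (by simp), hS, fun l hl => hg.eq_signs_vertex_of_weak hS hy hy' hl⟩

/-- Every cell has a vertex. -/
theorem GeneralPosition.exists_vertex_of_realizable (hg : 𝓗.GeneralPosition) (hn : d ≤ n)
    {σ : Fin n → Bool} (h : 𝓗.Realizable σ) :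
    ∃ S : Finset (Fin n), S.card = d ∧ ∀ l ∉ S, σ l = 𝓗.signs (𝓗.vertex S) l := by
  obtain ⟨z, hz⟩ := h
  obtain ⟨S, -, hS, y, hy, hy'⟩ := hg.exists_vertex_of_weak hn (σ := σ) d ∅
    (by simp) z (by simp) (fun i => (hz i).le)
  exact ⟨S, hS, fun l hl => hg.eq_signs_vertex_of_weak hS hy hy' hl⟩

theorem GeneralPosition.inner_ne_zero (hg : 𝓗.GeneralPosition) {P : Finset (Fin n)}
    (hP : P.card + 1 = d) {v : EuclideanSpace ℝ (Fin d)} (hv : v ≠ 0)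
    (h : ∀ i ∈ P, inner ℝ (𝓗.normal i) v = 0) {l : Fin n} (hl : l ∉ P) :
    inner ℝ (𝓗.normal l) v ≠ 0 := by
  intro h0
  apply hv
  apply hg.eq_zero_of_orthogonal (S := insert l P)
  · rw [Finset.card_insert_of_notMem hl, hP]
  · intro i hi
    rcases Finset.mem_insert.1 hi with rfl | hi
    · exact h0
    · exact h i hi

variable (𝓗) in
/-- A direction vector of the intersection of the hyperplanes indexed by `P` (for `d - 1` of
them, this intersection is a line). -/
def lineDir (P : Finset (Fin n)) : EuclideanSpace ℝ (Fin d) :=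
  Classical.epsilon fun v => v ≠ 0 ∧ ∀ i ∈ P, inner ℝ (𝓗.normal i) v = 0

theorem GeneralPosition.lineDir_spec (hg : 𝓗.GeneralPosition) {P : Finset (Fin n)}
    (hP : P.card + 1 = d) :
    𝓗.lineDir P ≠ 0 ∧ ∀ i ∈ P, inner ℝ (𝓗.normal i) (𝓗.lineDir P) = 0 := by
  apply Classical.epsilon_spec (p := fun v => v ≠ 0 ∧ ∀ i ∈ P, inner ℝ (𝓗.normal i) v = 0)
  have h1 := hg.finrank_commonKernel (A := P) (by omega)
  have : 𝓗.commonKernel P ≠ ⊥ := by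
    intro h
    rw [h] at h1
    simp at h1
    omega
  obtain ⟨v, hv, hv0⟩ := Submodule.exists_mem_ne_zero_of_ne_bot this
  exact ⟨v, hv0, 𝓗.mem_commonKernel.1 hv⟩

/-- The vertices on a line of the arrangement are linearly ordered, and two consecutive ones are on
the same side of all the other hyperplanes. -/
theorem GeneralPosition.exists_line_order (hg : 𝓗.GeneralPosition) {P : Finset (Fin n)}
    (hP : P.card + 1 = d) : ∃ t : Fin n → ℝ,
      (∀ k ∉ P, ∀ l ∉ P, t k = t l → k = l) ∧
      ∀ k ∉ P, ∀ k' ∉ P, (∀ l ∉ P, ¬ (t k < t l ∧ t l < t k')) → t k < t k' →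
        ∀ l ∉ P, l ≠ k → l ≠ k' →
          𝓗.signs (𝓗.vertex (insert k P)) l = 𝓗.signs (𝓗.vertex (insert k' P)) l := by
  obtain ⟨hv0, hv⟩ := hg.lineDir_spec hP
  set v := 𝓗.lineDir P
  obtain ⟨q, hq⟩ := hg.exists_common_point (A := P) (by omega)
  set m : Fin n → ℝ := fun l => inner ℝ (𝓗.normal l) v with hm
  have hm0 : ∀ l ∉ P, m l ≠ 0 := fun l hl => hg.inner_ne_zero hP hv0 hv hl
  set t : Fin n → ℝ := fun l => -𝓗.form l q / m l with ht
  have hform : ∀ l ∉ P, ∀ s : ℝ, 𝓗.form l (q + s • v) = m l * (s - t l) := by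
    intro l hl s
    rw [form_add_smul]
    have := hm0 l hl
    simp only [ht]
    field_simp
    ring
  have hcard : ∀ k ∉ P, (insert k P).card = d := fun k hk => by
    rw [Finset.card_insert_of_notMem hk, hP]
  have hpt : ∀ k ∉ P, ∀ i ∈ insert k P, 𝓗.form i (q + t k • v) = 0 := by
    intro k hk i hi
    rcases Finset.mem_insert.1 hi with rfl | hi
    · rw [hform i hk]; ring
    · rw [form_add_smul, hq i hi, hv i hi]; ring
  have hvert : ∀ k ∉ P, 𝓗.vertex (insert k P) = q + t k • v := fun k hk =>
    hg.vertex_unique (hcard k hk) (hg.form_vertex (hcard k hk)) (hpt k hk)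
  have hinj : ∀ k ∉ P, ∀ l ∉ P, t k = t l → k = l := by
    intro k hk l hl hkl
    by_contra hne
    have hl' : l ∉ insert k P := by simp [hl, Ne.symm hne]
    apply hg.form_ne_zero (hcard k hk) (hpt k hk) hl'
    rw [hform l hl, hkl]; ring
  refine ⟨t, hinj, ?_⟩
  intro k hk k' hk' hno hlt l hl hlk hlk'
  rw [hvert k hk, hvert k' hk']
  have h1 : t l ≠ t k := fun h => hlk (hinj l hl k hk h)
  have h2 : t l ≠ t k' := fun h => hlk' (hinj l hl k' hk' h)
  have h3 := hno l hl
  apply 𝓗.signs_eq_of_pos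
  have h4 := 𝓗.boolSign_signs_mul_pos (x := q + t k' • v) (i := l)
    (by rw [hform l hl]; exact mul_ne_zero (hm0 l hl) (sub_ne_zero.2 h2.symm))
  rw [hform l hl] at h4 ⊢
  rcases lt_or_gt_of_ne h1 with h | h
  · have e1 : 0 < t k - t l := by linarith
    have e2 : 0 < t k' - t l := by linarith
    rw [← mul_assoc] at h4 ⊢
    exact mul_pos (pos_of_mul_pos_left h4 e2.le) e1
  · have e2 : t k' - t l < 0 := by
      rcases lt_or_gt_of_ne h2 with h' | h'
      · exact absurd ⟨h, h'⟩ h3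
      · linarith
    have e1 : t k - t l < 0 := by linarith
    rw [← mul_assoc] at h4 ⊢
    exact mul_pos_of_neg_of_neg (neg_of_mul_pos_left h4 e2.le) e1

/-- There is a linear functional that is nonconstant on every line of the arrangement. -/
theorem GeneralPosition.exists_generic (hg : 𝓗.GeneralPosition) :
    ∃ h : EuclideanSpace ℝ (Fin d), ∀ P : Finset (Fin n), P.card + 1 = d →
      inner ℝ h (𝓗.lineDir P) ≠ 0 := by
  classical
  have key := Subspace.biUnion_ne_univ_of_top_notMem (k := ℝ) (E := EuclideanSpace ℝ (Fin d))
    (s := (Finset.univ.filter fun P : Finset (Fin n) => P.card + 1 = d).image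
      fun P => LinearMap.ker (innerₛₗ ℝ (𝓗.lineDir P))) (by
    intro htop
    obtain ⟨P, hP, hPtop⟩ := Finset.mem_image.1 htop
    have hP' : P.card + 1 = d := by simpa using hP
    have : 𝓗.lineDir P ∈ LinearMap.ker (innerₛₗ ℝ (𝓗.lineDir P)) := by rw [hPtop]; trivial
    simp at this
    exact (hg.lineDir_spec hP').1 this)
  rw [Ne, Set.eq_univ_iff_forall] at key
  push Not at key
  obtain ⟨h, hh⟩ := key
  refine ⟨h, fun P hP h0 => hh ?_⟩
  refine Set.mem_iUnion₂.2 ⟨_, Finset.mem_image.2 ⟨P, by simpa using hP, rfl⟩, ?_⟩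
  simpa [real_inner_comm] using h0

variable (𝓗) in
/-- The coefficient of the `i`-th normal in the expansion of `h` in the normals indexed by `S`. -/
def coeff (h : EuclideanSpace ℝ (Fin d)) (S : Finset (Fin n)) (i : Fin n) : ℝ :=
  inner ℝ h (𝓗.lineDir (S.erase i)) / inner ℝ (𝓗.normal i) (𝓗.lineDir (S.erase i))

theorem GeneralPosition.coeff_ne_zero (hg : 𝓗.GeneralPosition) {h : EuclideanSpace ℝ (Fin d)}
    (hh : ∀ P : Finset (Fin n), P.card + 1 = d → inner ℝ h (𝓗.lineDir P) ≠ 0)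
    {S : Finset (Fin n)} (hS : S.card = d) {i : Fin n} (hi : i ∈ S) : 𝓗.coeff h S i ≠ 0 := by
  have hc : (S.erase i).card + 1 = d := by rw [Finset.card_erase_add_one hi, hS]
  exact div_ne_zero (hh _ hc) (hg.inner_ne_zero hc (hg.lineDir_spec hc).1 (hg.lineDir_spec hc).2
    (Finset.notMem_erase i S))

theorem GeneralPosition.inner_sub_vertex (hg : 𝓗.GeneralPosition)
    (h : EuclideanSpace ℝ (Fin d)) {S : Finset (Fin n)} (hS : S.card = d)
    (x : EuclideanSpace ℝ (Fin d)) :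
    inner ℝ h (x - 𝓗.vertex S) = ∑ i ∈ S, 𝓗.coeff h S i * 𝓗.form i x := by
  have hc : ∀ i ∈ S, (S.erase i).card + 1 = d := fun i hi => by
    rw [Finset.card_erase_add_one hi, hS]
  have hne : ∀ i ∈ S, inner ℝ (𝓗.normal i) (𝓗.lineDir (S.erase i)) ≠ 0 := fun i hi =>
    hg.inner_ne_zero (hc i hi) (hg.lineDir_spec (hc i hi)).1 (hg.lineDir_spec (hc i hi)).2
      (Finset.notMem_erase i S)
  have hexp : x - 𝓗.vertex S = ∑ i ∈ S,
      (𝓗.form i x / inner ℝ (𝓗.normal i) (𝓗.lineDir (S.erase i))) • 𝓗.lineDir (S.erase i) := by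
    rw [← sub_eq_zero]
    apply hg.eq_zero_of_orthogonal hS
    intro j hj
    rw [inner_sub_right, inner_normal_sub, hg.form_vertex hS j hj, inner_sum,
      Finset.sum_eq_single_of_mem j hj]
    · rw [inner_smul_right, div_mul_cancel₀ _ (hne j hj)]; ring
    · intro i hi hij
      rw [inner_smul_right, (hg.lineDir_spec (hc i hi)).2 j (Finset.mem_erase.2 ⟨hij.symm, hj⟩),
        mul_zero]
  rw [hexp, inner_sum]
  refine Finset.sum_congr rfl fun i hi => ?_
  rw [inner_smul_right, coeff]
  ring

/-- A chamber has only one vertex at which a generic functional attains its minimum (or, for the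
opposite sign, its maximum). -/
theorem GeneralPosition.eq_of_extremal (hg : 𝓗.GeneralPosition) {h : EuclideanSpace ℝ (Fin d)}
    (hh : ∀ P : Finset (Fin n), P.card + 1 = d → inner ℝ h (𝓗.lineDir P) ≠ 0)
    {S S' : Finset (Fin n)} (hS : S.card = d) (hS' : S'.card = d) {σ : Fin n → Bool}
    (hσ : ∀ l ∉ S, σ l = 𝓗.signs (𝓗.vertex S) l)
    (hσ' : ∀ l ∉ S', σ l = 𝓗.signs (𝓗.vertex S') l) {ε : ℝ}
    (hext : ∀ i ∈ S, 0 < ε * (boolSign (σ i) * 𝓗.coeff h S i))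
    (hext' : ∀ i ∈ S', 0 < ε * (boolSign (σ i) * 𝓗.coeff h S' i)) : S = S' := by
  have weak : ∀ T : Finset (Fin n), T.card = d → (∀ l ∉ T, σ l = 𝓗.signs (𝓗.vertex T) l) →
      ∀ i, 0 ≤ boolSign (σ i) * 𝓗.form i (𝓗.vertex T) := by
    intro T hT hTσ i
    by_cases hi : i ∈ T
    · rw [hg.form_vertex hT i hi, mul_zero]
    · rw [hTσ i hi]
      exact (𝓗.boolSign_signs_mul_pos (hg.form_ne_zero hT (hg.form_vertex hT) hi)).le
  have bsq : ∀ b, boolSign b * boolSign b = 1 := by intro b; cases b <;> simp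
  have nonneg : ∀ T T' : Finset (Fin n), T.card = d → T'.card = d →
      (∀ l ∉ T', σ l = 𝓗.signs (𝓗.vertex T') l) →
      (∀ i ∈ T, 0 < ε * (boolSign (σ i) * 𝓗.coeff h T i)) →
      ∀ i ∈ T, 0 ≤ ε * (𝓗.coeff h T i * 𝓗.form i (𝓗.vertex T')) := by
    intro T T' hT hT' hTσ hTe i hi
    have := mul_nonneg (hTe i hi).le (weak T' hT' hTσ i)
    calc 0 ≤ _ := this
      _ = (boolSign (σ i) * boolSign (σ i)) * (ε * (𝓗.coeff h T i * 𝓗.form i (𝓗.vertex T'))) := by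
        ring
      _ = _ := by rw [bsq, one_mul]
  have e1 := hg.inner_sub_vertex h hS (𝓗.vertex S')
  have e2 := hg.inner_sub_vertex h hS' (𝓗.vertex S)
  have n1 := nonneg S S' hS hS' hσ' hext
  have n2 := nonneg S' S hS' hS hσ hext'
  have hneg : inner ℝ h (𝓗.vertex S - 𝓗.vertex S') = -inner ℝ h (𝓗.vertex S' - 𝓗.vertex S) := by
    rw [← inner_neg_right, neg_sub]
  have s1 := Finset.sum_nonneg n1
  have s2 := Finset.sum_nonneg n2
  rw [← Finset.mul_sum, ← e1] at s1
  rw [← Finset.mul_sum, ← e2, hneg] at s2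
  have s0 : ∑ i ∈ S, ε * (𝓗.coeff h S i * 𝓗.form i (𝓗.vertex S')) = 0 := by
    rw [← Finset.mul_sum, ← e1]; linarith
  have hz := (Finset.sum_eq_zero_iff_of_nonneg n1).1 s0
  have hsub : S ⊆ S' := by
    intro i hi
    by_contra hi'
    have h1 := hz i hi
    have h2 := hext i hi
    have h3 := hg.form_ne_zero hS' (hg.form_vertex hS') hi'
    have hε : ε ≠ 0 := by rintro rfl; simp at h2
    exact mul_ne_zero hε (mul_ne_zero (hg.coeff_ne_zero hh hS hi) h3) h1
  exact Finset.eq_of_subset_of_card_le hsub (by omega)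

end Arrangement
end

noncomputable section

open Finset

/-- A sum pulled back along a map with fibres of size at most `m`. -/
theorem sum_comp_le_of_card_fiber_le {α β : Type*} [DecidableEq β] {s : Finset α} {t : Finset β}
    {g : α → β} (hg : ∀ a ∈ s, g a ∈ t) {m : ℕ} (hm : ∀ b ∈ t, #{a ∈ s | g a = b} ≤ m)
    {φ : β → ℝ} (hφ : ∀ b ∈ t, 0 ≤ φ b) : ∑ a ∈ s, φ (g a) ≤ m * ∑ b ∈ t, φ b := by
  rw [← Finset.sum_fiberwise_of_maps_to hg, Finset.mul_sum]
  refine Finset.sum_le_sum fun b hb => ?_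
  rw [Finset.sum_congr rfl (g := fun _ => φ b) (by
    intro a ha
    rw [(Finset.mem_filter.1 ha).2]), Finset.sum_const, nsmul_eq_mul]
  exact mul_le_mul_of_nonneg_right (by exact_mod_cast hm b hb) (hφ b hb)

theorem sum_comp_le_of_injOn {α β : Type*} {s : Finset α} {t : Finset β}
    {g : α → β} (hg : ∀ a ∈ s, g a ∈ t) (hinj : Set.InjOn g s)
    {φ : β → ℝ} (hφ : ∀ b ∈ t, 0 ≤ φ b) : ∑ a ∈ s, φ (g a) ≤ ∑ b ∈ t, φ b := by
  classical
  rw [← Finset.sum_image (f := φ) hinj]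
  refine Finset.sum_le_sum_of_subset_of_nonneg ?_ (fun b hb _ => hφ b hb)
  intro b hb
  obtain ⟨a, ha, rfl⟩ := Finset.mem_image.1 hb
  exact hg a ha

theorem sum_fst_comp_le {Q α β : Type*} [Fintype Q] [Fintype α] [Fintype β] {g : Q → α × β}
    (hg : Function.Injective g) {φ : α → ℝ} (hφ : ∀ a, 0 ≤ φ a) :
    ∑ q, φ (g q).1 ≤ Fintype.card β * ∑ a, φ a := by
  refine (sum_comp_le_of_injOn (t := univ) (φ := fun x : α × β => φ x.1) (fun _ _ => mem_univ _)
    hg.injOn (fun x _ => hφ x.1)).trans_eq ?_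
  rw [Fintype.sum_prod_type, Finset.mul_sum]
  simp

/-- Telescoping along a linearly ordered finite set. -/
theorem abs_sub_le_two_mul_sum_of_consecutive {ι : Type*} (s : Finset ι) (t g a : ι → ℝ)
    (ha : ∀ k, 0 ≤ a k) (htinj : ∀ k ∈ s, ∀ l ∈ s, t k = t l → k = l)
    (h : ∀ k ∈ s, ∀ k' ∈ s, (∀ l ∈ s, ¬ (t k < t l ∧ t l < t k')) → t k < t k' →
      |g k - g k'| ≤ a k + a k') :
    ∀ k ∈ s, ∀ k' ∈ s, |g k - g k'| ≤ 2 * ∑ l ∈ s, a l := by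
  have main : ∀ N : ℕ, ∀ k ∈ s, ∀ k' ∈ s, t k < t k' →
      #{l ∈ s | t k < t l ∧ t l < t k'} ≤ N →
      |g k - g k'| ≤ ∑ l ∈ s with t k ≤ t l ∧ t l < t k', a l
        + ∑ l ∈ s with t k < t l ∧ t l ≤ t k', a l := by
    intro N
    induction N with
    | zero =>
      intro k hk k' hk' hlt hN
      have hempty := Finset.card_eq_zero.1 (Nat.le_zero.1 hN)
      have hno : ∀ l ∈ s, ¬ (t k < t l ∧ t l < t k') := by
        intro l hl hl'
        have : l ∈ ({l ∈ s | t k < t l ∧ t l < t k'} : Finset ι) := Finset.mem_filter.2 ⟨hl, hl'⟩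
        rw [hempty] at this
        simp at this
      refine (h k hk k' hk' hno hlt).trans (add_le_add ?_ ?_)
      · exact Finset.single_le_sum (f := a) (fun l _ => ha l)
          (Finset.mem_filter.2 ⟨hk, le_rfl, hlt⟩)
      · exact Finset.single_le_sum (f := a) (fun l _ => ha l)
          (Finset.mem_filter.2 ⟨hk', hlt, le_rfl⟩)
    | succ N ih =>
      intro k hk k' hk' hlt hN
      by_cases hno : ∀ l ∈ s, ¬ (t k < t l ∧ t l < t k')
      · refine ih k hk k' hk' hlt ?_
        rw [Finset.filter_eq_empty_iff.2 hno]
        simp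
      · push Not at hno
        obtain ⟨m, hm, hkm, hmk'⟩ := hno
        have h1 := ih k hk m hm hkm (Nat.lt_succ_iff.1 (lt_of_lt_of_le (Finset.card_lt_card (by
          rw [Finset.ssubset_iff_of_subset]
          · exact ⟨m, Finset.mem_filter.2 ⟨hm, hkm, hmk'⟩, by simp⟩
          · intro l hl
            simp only [Finset.mem_filter] at hl ⊢
            exact ⟨hl.1, hl.2.1, hl.2.2.trans hmk'⟩)) hN))
        have h2 := ih m hm k' hk' hmk' (Nat.lt_succ_iff.1 (lt_of_lt_of_le (Finset.card_lt_card (by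
          rw [Finset.ssubset_iff_of_subset]
          · exact ⟨m, Finset.mem_filter.2 ⟨hm, hkm, hmk'⟩, by simp⟩
          · intro l hl
            simp only [Finset.mem_filter] at hl ⊢
            exact ⟨hl.1, hkm.trans hl.2.1, hl.2.2⟩)) hN))
        have e1 : ∑ l ∈ s with t k ≤ t l ∧ t l < t k', a l
            = ∑ l ∈ s with t k ≤ t l ∧ t l < t m, a l
              + ∑ l ∈ s with t m ≤ t l ∧ t l < t k', a l := by
          simp only [Finset.sum_filter]
          rw [← Finset.sum_add_distrib]
          refine Finset.sum_congr rfl fun l _ => ?_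
          rcases lt_or_ge (t l) (t m) with hl | hl
          · simp [hl, hl.not_ge, hl.trans hmk']
          · simp [hl, hl.not_gt, hkm.le.trans hl]
        have e2 : ∑ l ∈ s with t k < t l ∧ t l ≤ t k', a l
            = ∑ l ∈ s with t k < t l ∧ t l ≤ t m, a l
              + ∑ l ∈ s with t m < t l ∧ t l ≤ t k', a l := by
          simp only [Finset.sum_filter]
          rw [← Finset.sum_add_distrib]
          refine Finset.sum_congr rfl fun l _ => ?_
          rcases le_or_gt (t l) (t m) with hl | hl
          · simp [hl, hl.not_gt, hl.trans hmk'.le]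
          · simp [hl, hl.not_ge, hkm.trans hl]
        rw [e1, e2]
        have := abs_sub_le (g k) (g m) (g k')
        linarith
  have lt_case : ∀ k ∈ s, ∀ k' ∈ s, t k < t k' → |g k - g k'| ≤ 2 * ∑ l ∈ s, a l := by
    intro k hk k' hk' hlt
    refine (main _ k hk k' hk' hlt le_rfl).trans ?_
    rw [two_mul]
    exact add_le_add
      (Finset.sum_le_sum_of_subset_of_nonneg (Finset.filter_subset _ _) fun l _ _ => ha l)
      (Finset.sum_le_sum_of_subset_of_nonneg (Finset.filter_subset _ _) fun l _ _ => ha l)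
  intro k hk k' hk'
  rcases lt_trichotomy (t k) (t k') with hlt | heq | hlt
  · exact lt_case k hk k' hk' hlt
  · rw [htinj k hk k' hk' heq]
    have := Finset.sum_nonneg (s := s) (f := a) (fun l _ => ha l)
    simp only [sub_self, abs_zero]
    linarith
  · rw [abs_sub_comm]
    exact lt_case k' hk' k hk hlt

/-- The combinatorial data of the vertices of a simple arrangement of `n` planes in space: the
realizable sign vectors, the sides `loc S` of the vertex at the intersection of the planes in `S`,
and the signs `up S` of the coefficients of a generic functional in the basis of normals at `S`. -/
structure VertexSystem (n : ℕ) where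
  realizable : (Fin n → Bool) → Prop
  loc : Finset (Fin n) → Fin n → Bool
  up : Finset (Fin n) → Fin n → Bool
  realizable_octant : ∀ S : Finset (Fin n), #S = 3 → ∀ s, realizable (S.piecewise s (loc S))
  exists_vertex : ∀ σ k, realizable σ → realizable (flipAt σ k) →
    ∃ S : Finset (Fin n), k ∈ S ∧ #S = 3 ∧ ∀ l ∉ S, σ l = loc S l
  line_order : ∀ P : Finset (Fin n), #P = 2 → ∃ t : Fin n → ℝ,
    (∀ k ∉ P, ∀ l ∉ P, t k = t l → k = l) ∧
      ∀ k ∉ P, ∀ k' ∉ P, (∀ l ∉ P, ¬ (t k < t l ∧ t l < t k')) → t k < t k' →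
        ∀ l ∉ P, l ≠ k → l ≠ k' → loc (insert k P) l = loc (insert k' P) l
  extremal_unique : ∀ (ε : Bool) (S S' : Finset (Fin n)), #S = 3 → #S' = 3 →
    S.piecewise (fun i => up S i ^^ ε) (loc S) = S'.piecewise (fun i => up S' i ^^ ε) (loc S') →
    S = S'

theorem boolSign_decide_mul_pos {c : ℝ} (hc : c ≠ 0) : 0 < boolSign (decide (0 < c)) * c := by
  rcases lt_or_gt_of_ne hc with h | h
  · simp [h.le.not_gt, h]
  · simp [h]

/-- The vertex system of an arrangement in general position in space. -/
def Arrangement.GeneralPosition.vertexSystem {n : ℕ} {𝓗 : Arrangement 3 n}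
    (hg : 𝓗.GeneralPosition) (hn : 3 ≤ n) : VertexSystem n where
  realizable := 𝓗.Realizable
  loc S := 𝓗.signs (𝓗.vertex S)
  up S i := decide (0 < 𝓗.coeff hg.exists_generic.choose S i)
  realizable_octant S hS s := hg.realizable_vertex hS s
  exists_vertex σ k h h' := hg.exists_vertex_of_wall (by norm_num) hn h h'
  line_order P hP := hg.exists_line_order (by rw [hP])
  extremal_unique := by
    intro ε S S' hS hS' h
    have hh := hg.exists_generic.choose_spec
    have pos : ∀ T : Finset (Fin n), #T = 3 → ∀ i ∈ T, 0 < boolSign (!ε) * (boolSign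
        (decide (0 < 𝓗.coeff hg.exists_generic.choose T i) ^^ ε) *
          𝓗.coeff hg.exists_generic.choose T i) := by
      intro T hT i hi
      have h0 := boolSign_decide_mul_pos (hg.coeff_ne_zero hh hT hi)
      cases ε
      · simpa only [Bool.not_false, boolSign_true, one_mul, Bool.xor_false] using h0
      · simpa only [Bool.not_true, boolSign_false, Bool.xor_true, boolSign_not, neg_mul, one_mul,
          neg_neg] using h0
    refine hg.eq_of_extremal hh hS hS' (σ := S.piecewise
      (fun i => decide (0 < 𝓗.coeff hg.exists_generic.choose S i) ^^ ε) (𝓗.signs (𝓗.vertex S)))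
      (ε := boolSign (!ε)) ?_ ?_ ?_ ?_
    · intro l hl
      rw [Finset.piecewise_eq_of_notMem _ _ _ hl]
    · intro l hl
      rw [h, Finset.piecewise_eq_of_notMem _ _ _ hl]
    · intro i hi
      rw [Finset.piecewise_eq_of_mem _ _ _ hi]
      exact pos S hS i hi
    · intro i hi
      rw [h, Finset.piecewise_eq_of_mem _ _ _ hi]
      exact pos S' hS' i hi

/-- The squared increment of `F` along a directed edge. -/
def flipEnergy {n : ℕ} (F : (Fin n → Bool) → ℝ) (x : (Fin n → Bool) × Fin n) : ℝ :=
  (F x.1 - F (flipAt x.1 x.2)) ^ 2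

theorem flipEnergy_nonneg {n : ℕ} (F : (Fin n → Bool) → ℝ) (x : (Fin n → Bool) × Fin n) :
    0 ≤ flipEnergy F x := sq_nonneg _

namespace VertexSystem

variable {n : ℕ} (X : VertexSystem n) (F : (Fin n → Bool) → ℝ)

open Classical in
/-- The directed edges: a realizable sign vector and an entry that can be flipped. -/
def darts : Finset ((Fin n → Bool) × Fin n) :=
  univ.filter fun x => X.realizable x.1 ∧ X.realizable (flipAt x.1 x.2)

/-- The sign vector of one of the eight octants at a vertex. -/
def octant (S : Finset (Fin n)) (s : Fin n → Bool) : Fin n → Bool := S.piecewise s (X.loc S)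

/-- The energy of the six edges at the two octants on which the generic functional is extremal. -/
def extremalEnergy (S : Finset (Fin n)) : ℝ :=
  ∑ k ∈ S, ∑ ε : Bool, flipEnergy F (X.octant S (fun i => X.up S i ^^ ε), k)

/-- The energy of all edges between octants at a vertex. -/
def localEnergy (S : Finset (Fin n)) : ℝ :=
  ∑ k ∈ S, ∑ A ∈ S.powerset, flipEnergy F (X.octant S (fun i => decide (i ∈ A)), k)

theorem extremalEnergy_nonneg (S : Finset (Fin n)) : 0 ≤ X.extremalEnergy F S :=
  Finset.sum_nonneg fun _ _ => Finset.sum_nonneg fun _ _ => flipEnergy_nonneg _ _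

theorem localEnergy_nonneg (S : Finset (Fin n)) : 0 ≤ X.localEnergy F S :=
  Finset.sum_nonneg fun _ _ => Finset.sum_nonneg fun _ _ => flipEnergy_nonneg _ _

variable {X F}

theorem octant_of_mem {S : Finset (Fin n)} {s : Fin n → Bool} {i : Fin n} (hi : i ∈ S) :
    X.octant S s i = s i := Finset.piecewise_eq_of_mem _ _ _ hi

theorem octant_of_notMem {S : Finset (Fin n)} {s : Fin n → Bool} {i : Fin n} (hi : i ∉ S) :
    X.octant S s i = X.loc S i := Finset.piecewise_eq_of_notMem _ _ _ hi

theorem octant_congr {S : Finset (Fin n)} {s s' : Fin n → Bool} (h : ∀ i ∈ S, s i = s' i) :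
    X.octant S s = X.octant S s' := by
  funext i
  by_cases hi : i ∈ S
  · rw [octant_of_mem hi, octant_of_mem hi, h i hi]
  · rw [octant_of_notMem hi, octant_of_notMem hi]

theorem octant_eq_self {S : Finset (Fin n)} {σ : Fin n → Bool} (h : ∀ l ∉ S, σ l = X.loc S l) :
    X.octant S σ = σ := by
  funext i
  by_cases hi : i ∈ S
  · rw [octant_of_mem hi]
  · rw [octant_of_notMem hi, h i hi]

theorem flipAt_octant {S : Finset (Fin n)} {s s' : Fin n → Bool} {k : Fin n} (hk : k ∈ S)
    (h : ∀ i ∈ S, i ≠ k → s i = s' i) (hne : s k ≠ s' k) :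
    flipAt (X.octant S s) k = X.octant S s' := by
  funext i
  by_cases hik : i = k
  · subst hik
    rw [flipAt_self, octant_of_mem hk, octant_of_mem hk]
    cases h1 : s i <;> cases h2 : s' i <;> simp_all
  · rw [flipAt_of_ne _ hik]
    by_cases hi : i ∈ S
    · rw [octant_of_mem hi, octant_of_mem hi, h i hi hik]
    · rw [octant_of_notMem hi, octant_of_notMem hi]

theorem octant_mem_darts {S : Finset (Fin n)} (hS : #S = 3) (s : Fin n → Bool) {k : Fin n}
    (hk : k ∈ S) : (X.octant S s, k) ∈ X.darts := by
  have : flipAt (X.octant S s) k = X.octant S (flipAt s k) :=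
    flipAt_octant hk (fun i _ hik => (flipAt_of_ne _ hik).symm) (by rw [flipAt_self]; simp)
  simp only [darts, Finset.mem_filter, Finset.mem_univ, true_and]
  rw [this]
  exact ⟨X.realizable_octant S hS _, X.realizable_octant S hS _⟩

theorem sq_sub_le_localEnergy {S : Finset (Fin n)} {k : Fin n} (hk : k ∈ S)
    {s s' : Fin n → Bool} (h : ∀ i ∈ S, i ≠ k → s i = s' i) :
    (F (X.octant S s) - F (X.octant S s')) ^ 2 ≤ X.localEnergy F S := by
  by_cases hs : s k = s' k
  · rw [octant_congr (s := s) (s' := s') fun i hi => by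
      by_cases hik : i = k
      · rw [hik, hs]
      · exact h i hi hik]
    simpa using X.localEnergy_nonneg F S
  · have hA : X.octant S s = X.octant S (fun i => decide (i ∈ S.filter fun i => s i)) :=
      octant_congr fun i hi => by simp [hi]
    calc _ = flipEnergy F (X.octant S s, k) := by rw [flipEnergy, flipAt_octant hk h hs]
      _ = flipEnergy F (X.octant S (fun i => decide (i ∈ S.filter fun i => s i)), k) := by rw [hA]
      _ ≤ ∑ A ∈ S.powerset, flipEnergy F (X.octant S (fun i => decide (i ∈ A)), k) :=
        Finset.single_le_sum (f := fun A => flipEnergy F (X.octant S (fun i => decide (i ∈ A)), k))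
          (fun _ _ => flipEnergy_nonneg _ _)
          (Finset.mem_powerset.2 (Finset.filter_subset _ _))
      _ ≤ _ := Finset.single_le_sum (f := fun k => ∑ A ∈ S.powerset,
          flipEnergy F (X.octant S (fun i => decide (i ∈ A)), k))
          (fun _ _ => Finset.sum_nonneg fun _ _ => flipEnergy_nonneg _ _) hk

theorem sq_sub_octant_le {S : Finset (Fin n)} (hS : #S = 3) (s s' : Fin n → Bool) :
    (F (X.octant S s) - F (X.octant S s')) ^ 2 ≤ 9 * X.localEnergy F S := by
  obtain ⟨i, j, k, hij, hik, hjk, rfl⟩ := Finset.card_eq_three.1 hS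
  set S : Finset (Fin n) := {i, j, k} with hSdef
  set s1 := Function.update s i (s' i) with hs1
  set s2 := Function.update s1 j (s' j) with hs2
  have h1 : (F (X.octant S s) - F (X.octant S s1)) ^ 2 ≤ X.localEnergy F S :=
    sq_sub_le_localEnergy (k := i) (by simp [hSdef]) fun l _ hl => by simp [hs1, hl]
  have h2 : (F (X.octant S s1) - F (X.octant S s2)) ^ 2 ≤ X.localEnergy F S :=
    sq_sub_le_localEnergy (k := j) (by simp [hSdef]) fun l _ hl => by simp [hs2, hl]
  have h3 : (F (X.octant S s2) - F (X.octant S s')) ^ 2 ≤ X.localEnergy F S :=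
    sq_sub_le_localEnergy (k := k) (by simp [hSdef]) fun l hl hlk => by
      simp only [hSdef, Finset.mem_insert, Finset.mem_singleton] at hl
      rcases hl with rfl | rfl | rfl
      · simp [hs2, hs1, hij]
      · simp [hs2]
      · exact absurd rfl hlk
  set x := F (X.octant S s) - F (X.octant S s1)
  set y := F (X.octant S s1) - F (X.octant S s2)
  set z := F (X.octant S s2) - F (X.octant S s')
  have : F (X.octant S s) - F (X.octant S s') = x + y + z := by ring
  rw [this]
  nlinarith [sq_nonneg (x - y), sq_nonneg (y - z), sq_nonneg (x - z)]

/-- Flipping a sign next to an extremal octant. -/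
theorem abs_sub_le_sqrt_extremalEnergy {S : Finset (Fin n)} {k : Fin n} (hk : k ∈ S)
    {s s' : Fin n → Bool} (ε : Bool) (h : ∀ i ∈ S, i ≠ k → s i = (X.up S i ^^ ε))
    (h' : ∀ i ∈ S, i ≠ k → s' i = (X.up S i ^^ ε)) :
    |F (X.octant S s) - F (X.octant S s')| ≤ √(X.extremalEnergy F S) := by
  have main : ∀ s s' : Fin n → Bool, (∀ i ∈ S, i ≠ k → s i = (X.up S i ^^ ε)) →
      (∀ i ∈ S, i ≠ k → s' i = (X.up S i ^^ ε)) → s k = (X.up S k ^^ ε) → s k ≠ s' k →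
      |F (X.octant S s) - F (X.octant S s')| ≤ √(X.extremalEnergy F S) := by
    intro s s' h h' hsk hs
    apply Real.abs_le_sqrt
    have hA : X.octant S s = X.octant S (fun i => X.up S i ^^ ε) :=
      octant_congr fun i hi => by
        by_cases hik : i = k
        · rw [hik, hsk]
        · exact h i hi hik
    calc _ = flipEnergy F (X.octant S s, k) := by
            rw [flipEnergy, flipAt_octant hk
              (fun i hi hik => (h i hi hik).trans (h' i hi hik).symm) hs]
      _ = flipEnergy F (X.octant S (fun i => X.up S i ^^ ε), k) := by rw [hA]
      _ ≤ ∑ ε : Bool, flipEnergy F (X.octant S (fun i => X.up S i ^^ ε), k) :=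
        Finset.single_le_sum (f := fun ε => flipEnergy F (X.octant S (fun i => X.up S i ^^ ε), k))
          (fun _ _ => flipEnergy_nonneg _ _) (Finset.mem_univ ε)
      _ ≤ _ := Finset.single_le_sum (f := fun k => ∑ ε : Bool,
          flipEnergy F (X.octant S (fun i => X.up S i ^^ ε), k))
          (fun _ _ => Finset.sum_nonneg fun _ _ => flipEnergy_nonneg _ _) hk
  by_cases hs : s k = s' k
  · rw [octant_congr (s := s) (s' := s') fun i hi => by
      by_cases hik : i = k
      · rw [hik, hs]
      · rw [h i hi hik, h' i hi hik]]
    simp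
  · by_cases hsk : s k = (X.up S k ^^ ε)
    · exact main s s' h h' hsk hs
    · rw [abs_sub_comm]
      refine main s' s h' h ?_ (Ne.symm hs)
      cases h1 : s k <;> cases h2 : s' k <;> simp_all

end VertexSystem
end

noncomputable section

open Finset

/-- Around a segment between two consecutive vertices of a line, the extremal edges connect the
quadrants through which the two vertices are crossed. -/
theorem quadrant_route : ∀ ei ej ek ei' ej' ek' c c' : Bool,
    (!(ei ^^ ej)) = (!(ei' ^^ ej')) ∨
    ((true ^^ c) = (ei ^^ ek) ∨ (true ^^ c') = (ei' ^^ ek')) ∨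
    (((false ^^ c) = (ei ^^ ek) ∨ (false ^^ c') = (ei' ^^ ek')) ∧
      (((!(ei ^^ ej)) ^^ c) = (ej ^^ ek) ∨ ((!(ei ^^ ej)) ^^ c') = (ej' ^^ ek')) ∧
      (((!(ei' ^^ ej')) ^^ c) = (ej ^^ ek) ∨ ((!(ei' ^^ ej')) ^^ c') = (ej' ^^ ek'))) := by
  decide

namespace VertexSystem

variable {n : ℕ} {X : VertexSystem n} {F : (Fin n → Bool) → ℝ}

/-- The octant at the vertex `{i, j, k}` with signs `a`, `b`, `c`. -/
def octant₃ (X : VertexSystem n) (i j k : Fin n) (a b c : Bool) : Fin n → Bool :=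
  X.octant (insert k {i, j}) fun l => if l = i then a else if l = j then b else c

section Line

variable {i j : Fin n}

theorem abs_sub_octant₃_le_third {k : Fin n} (hij : i ≠ j) (hki : k ≠ i) (hkj : k ≠ j)
    {a b : Bool} (c c' : Bool)
    (h : (a ^^ b) = (X.up (insert k {i, j}) i ^^ X.up (insert k {i, j}) j)) :
    |F (X.octant₃ i j k a b c) - F (X.octant₃ i j k a b c')|
      ≤ √(X.extremalEnergy F (insert k {i, j})) := by
  refine abs_sub_le_sqrt_extremalEnergy (k := k) (by simp)
    (X.up (insert k {i, j}) i ^^ a) ?_ ?_ <;>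
  · intro l hl hlk
    simp only [Finset.mem_insert, Finset.mem_singleton] at hl
    rcases hl with rfl | rfl | rfl
    · exact absurd rfl hlk
    · simp
    · simp only [hij.symm, if_false, if_true]
      revert h
      generalize X.up (insert k {i, l}) i = u
      generalize X.up (insert k {i, l}) l = v
      revert a b u v
      decide

theorem abs_sub_octant₃_le_fst {k : Fin n} (hij : i ≠ j) (hki : k ≠ i) (hkj : k ≠ j)
    (a a' : Bool) {b c : Bool}
    (h : (b ^^ c) = (X.up (insert k {i, j}) j ^^ X.up (insert k {i, j}) k)) :
    |F (X.octant₃ i j k a b c) - F (X.octant₃ i j k a' b c)|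
      ≤ √(X.extremalEnergy F (insert k {i, j})) := by
  refine abs_sub_le_sqrt_extremalEnergy (k := i) (by simp)
    (X.up (insert k {i, j}) j ^^ b) ?_ ?_ <;>
  · intro l hl hlk
    simp only [Finset.mem_insert, Finset.mem_singleton] at hl
    rcases hl with rfl | rfl | rfl
    · simp only [hki, hkj, if_false]
      revert h
      generalize X.up (insert l {i, j}) j = u
      generalize X.up (insert l {i, j}) l = v
      revert b c u v
      decide
    · exact absurd rfl hlk
    · simp [hij.symm]

theorem abs_sub_octant₃_le_snd {k : Fin n} (hij : i ≠ j) (hki : k ≠ i) (hkj : k ≠ j)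
    {a : Bool} (b b' : Bool) {c : Bool}
    (h : (a ^^ c) = (X.up (insert k {i, j}) i ^^ X.up (insert k {i, j}) k)) :
    |F (X.octant₃ i j k a b c) - F (X.octant₃ i j k a b' c)|
      ≤ √(X.extremalEnergy F (insert k {i, j})) := by
  refine abs_sub_le_sqrt_extremalEnergy (k := j) (by simp)
    (X.up (insert k {i, j}) i ^^ a) ?_ ?_ <;>
  · intro l hl hlk
    simp only [Finset.mem_insert, Finset.mem_singleton] at hl
    rcases hl with rfl | rfl | rfl
    · simp only [hki, hkj, if_false]
      revert h
      generalize X.up (insert l {i, j}) i = u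
      generalize X.up (insert l {i, j}) l = v
      revert a c u v
      decide
    · simp
    · exact absurd rfl hlk

/-- The octant through which the line `{i, j}` is followed at the vertex `{i, j, k}`. -/
def lineOctant (X : VertexSystem n) (i j k : Fin n) : Fin n → Bool :=
  X.octant₃ i j k true (!(X.up (insert k {i, j}) i ^^ X.up (insert k {i, j}) j)) true

theorem abs_sub_lineOctant_le_of_consecutive (hij : i ≠ j) {k k' : Fin n}
    (hki : k ≠ i) (hkj : k ≠ j) (hki' : k' ≠ i) (hkj' : k' ≠ j) (hkk' : k ≠ k')
    (hloc : ∀ l, l ≠ i → l ≠ j → l ≠ k → l ≠ k' →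
      X.loc (insert k {i, j}) l = X.loc (insert k' {i, j}) l) :
    |F (X.lineOctant i j k) - F (X.lineOctant i j k')| ≤
      5 * (√(X.extremalEnergy F (insert k {i, j})) + √(X.extremalEnergy F (insert k' {i, j}))) := by
  set S := insert k ({i, j} : Finset (Fin n)) with hS
  set S' := insert k' ({i, j} : Finset (Fin n)) with hS'
  set w := √(X.extremalEnergy F S) with hw
  set w' := √(X.extremalEnergy F S') with hw'
  have hw0 : 0 ≤ w := Real.sqrt_nonneg _
  have hw0' : 0 ≤ w' := Real.sqrt_nonneg _
  set c := X.loc S' k with hc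
  set c' := X.loc S k' with hc'
  have seg : ∀ a b, X.octant₃ i j k a b c = X.octant₃ i j k' a b c' := by
    intro a b
    funext l
    by_cases hl1 : l = k
    · subst hl1
      rw [octant₃, octant₃, octant_of_mem (by simp), octant_of_notMem (by simp [hki, hkj, hkk'])]
      simp [hki, hkj, hc, hS']
    by_cases hl2 : l = k'
    · subst hl2
      rw [octant₃, octant₃, octant_of_mem (S := insert l {i, j}) (by simp),
        octant_of_notMem (by simp [hki', hkj', hl1])]
      simp [hki', hkj', hc', hS]
    by_cases hl3 : l = i ∨ l = j
    · rw [octant₃, octant₃, octant_of_mem (by simp [hl3]), octant_of_mem (by simp [hl3])]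
      rcases hl3 with rfl | rfl <;> simp [hij.symm]
    · push Not at hl3
      rw [octant₃, octant₃, octant_of_notMem (by simp [hl1, hl3]),
        octant_of_notMem (by simp [hl2, hl3])]
      exact hloc l hl3.1 hl3.2 hl1 hl2
  set G : Bool → Bool → ℝ := fun a b => F (X.octant₃ i j k a b c) with hG
  have hfst : ∀ a a' b, ((b ^^ c) = (X.up S j ^^ X.up S k) ∨
      (b ^^ c') = (X.up S' j ^^ X.up S' k')) → |G a b - G a' b| ≤ w + w' := by
    rintro a a' b (h | h)
    · have := abs_sub_octant₃_le_fst (F := F) hij hki hkj a a' h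
      simp only [hG]
      linarith
    · have := abs_sub_octant₃_le_fst (F := F) hij hki' hkj' a a' h
      rw [← seg, ← seg] at this
      simp only [hG]
      linarith
  have hsnd : ∀ a b b', ((a ^^ c) = (X.up S i ^^ X.up S k) ∨
      (a ^^ c') = (X.up S' i ^^ X.up S' k')) → |G a b - G a b'| ≤ w + w' := by
    rintro a b b' (h | h)
    · have := abs_sub_octant₃_le_snd (F := F) hij hki hkj b b' h
      simp only [hG]
      linarith
    · have := abs_sub_octant₃_le_snd (F := F) hij hki' hkj' b b' h
      rw [← seg, ← seg] at this
      simp only [hG]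
      linarith
  set β := !(X.up S i ^^ X.up S j) with hβ
  set β' := !(X.up S' i ^^ X.up S' j) with hβ'
  have h1 : |F (X.lineOctant i j k) - G true β| ≤ w := by
    apply abs_sub_octant₃_le_third hij hki hkj
    rw [← hS]
    simp
  have h2 : |F (X.lineOctant i j k') - G true β'| ≤ w' := by
    simp only [hG]
    rw [seg]
    apply abs_sub_octant₃_le_third hij hki' hkj'
    rw [← hS']
    simp
  have h3 : |G true β - G true β'| ≤ 3 * (w + w') := by
    rcases quadrant_route (X.up S i) (X.up S j) (X.up S k) (X.up S' i) (X.up S' j) (X.up S' k') c c'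
      with h | h | ⟨h, h', h''⟩
    · rw [hβ, hβ', h]
      simp
      positivity
    · have := hsnd true β β' h
      linarith
    · have e1 := hfst true false β h'
      have e2 := hsnd false β β' h
      have e3 := hfst false true β' h''
      have := abs_sub_le (G true β) (G false β) (G true β')
      have := abs_sub_le (G false β) (G false β') (G true β')
      linarith
  rw [abs_sub_comm] at h2
  have := abs_sub_le (F (X.lineOctant i j k)) (G true β) (F (X.lineOctant i j k'))
  have := abs_sub_le (G true β) (G true β') (F (X.lineOctant i j k'))
  linarith

/-- The values at two vertices of a line differ by at most the extremal energy along the line. -/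
theorem sq_sub_lineOctant_le (hij : i ≠ j) {k k' : Fin n}
    (hk : k ∉ ({i, j} : Finset (Fin n))) (hk' : k' ∉ ({i, j} : Finset (Fin n))) :
    (F (X.lineOctant i j k) - F (X.lineOctant i j k')) ^ 2 ≤
      100 * n * ∑ l ∈ ({i, j} : Finset (Fin n))ᶜ, X.extremalEnergy F (insert l {i, j}) := by
  set P : Finset (Fin n) := {i, j} with hP
  obtain ⟨t, ht, hcons⟩ := X.line_order P (by rw [hP, Finset.card_pair hij])
  have hmem : ∀ {l}, l ∉ P → l ≠ i ∧ l ≠ j := by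
    intro l hl
    simpa [hP] using hl
  have key := abs_sub_le_two_mul_sum_of_consecutive Pᶜ t (fun k => F (X.lineOctant i j k))
    (fun l => 5 * √(X.extremalEnergy F (insert l P))) (fun _ => by positivity)
    (fun k hk l hl => ht k (Finset.mem_compl.1 hk) l (Finset.mem_compl.1 hl))
    (by
      intro k hk k' hk' hno hlt
      rw [Finset.mem_compl] at hk hk'
      rw [← mul_add]
      refine abs_sub_lineOctant_le_of_consecutive hij (hmem hk).1 (hmem hk).2 (hmem hk').1
        (hmem hk').2 (fun h => by rw [h] at hlt; exact lt_irrefl _ hlt) ?_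
      intro l hli hlj hlk hlk'
      exact hcons k hk k' hk' (fun l hl => hno l (Finset.mem_compl.2 hl)) hlt l
        (by simp [hP, hli, hlj]) hlk hlk')
    k (Finset.mem_compl.2 hk) k' (Finset.mem_compl.2 hk')
  rw [← Finset.mul_sum] at key
  have hcs := sq_sum_le_card_mul_sum_sq (s := Pᶜ) (f := fun l => √(X.extremalEnergy F (insert l P)))
  simp only [Real.sq_sqrt (X.extremalEnergy_nonneg F _)] at hcs
  have hcard : ((#(Pᶜ) : ℕ) : ℝ) ≤ n := by
    have := Finset.card_le_univ (Pᶜ)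
    rw [Fintype.card_fin] at this
    exact_mod_cast this
  have hnn : 0 ≤ ∑ l ∈ Pᶜ, X.extremalEnergy F (insert l P) :=
    Finset.sum_nonneg fun _ _ => X.extremalEnergy_nonneg F _
  calc (F (X.lineOctant i j k) - F (X.lineOctant i j k')) ^ 2
      = |F (X.lineOctant i j k) - F (X.lineOctant i j k')| ^ 2 := (sq_abs _).symm
    _ ≤ (2 * (5 * ∑ l ∈ Pᶜ, √(X.extremalEnergy F (insert l P)))) ^ 2 :=
        pow_le_pow_left₀ (abs_nonneg _) key 2
    _ = 100 * (∑ l ∈ Pᶜ, √(X.extremalEnergy F (insert l P))) ^ 2 := by ring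
    _ ≤ 100 * (n * ∑ l ∈ Pᶜ, X.extremalEnergy F (insert l P)) := by
        have := hcs.trans (mul_le_mul_of_nonneg_right hcard hnn)
        linarith
    _ = _ := by ring

end Line

/-- The value at the octant of a vertex with all signs positive. -/
def baseValue (X : VertexSystem n) (F : (Fin n → Bool) → ℝ) (S : Finset (Fin n)) : ℝ :=
  F (X.octant S fun _ => true)

theorem sq_sub_baseValue_le {i j k k' : Fin n} (hij : i ≠ j)
    (hk : k ∉ ({i, j} : Finset (Fin n))) (hk' : k' ∉ ({i, j} : Finset (Fin n))) :
    (X.baseValue F (insert k {i, j}) - X.baseValue F (insert k' {i, j})) ^ 2 ≤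
      27 * X.localEnergy F (insert k {i, j}) + 27 * X.localEnergy F (insert k' {i, j}) +
      300 * n * ∑ l ∈ ({i, j} : Finset (Fin n))ᶜ, X.extremalEnergy F (insert l {i, j}) := by
  have hc : ∀ l ∉ ({i, j} : Finset (Fin n)), #(insert l ({i, j} : Finset (Fin n))) = 3 := by
    intro l hl
    rw [Finset.card_insert_of_notMem hl, Finset.card_pair hij]
  have h1 : (X.baseValue F (insert k {i, j}) - F (X.lineOctant i j k)) ^ 2 ≤ _ :=
    sq_sub_octant_le (hc k hk) _ _
  have h2 := sq_sub_lineOctant_le (X := X) (F := F) hij hk hk'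
  have h3 : (F (X.lineOctant i j k') - X.baseValue F (insert k' {i, j})) ^ 2 ≤ _ :=
    sq_sub_octant_le (hc k' hk') _ _
  set x := X.baseValue F (insert k {i, j}) - F (X.lineOctant i j k)
  set y := F (X.lineOctant i j k) - F (X.lineOctant i j k')
  set z := F (X.lineOctant i j k') - X.baseValue F (insert k' {i, j})
  have : X.baseValue F (insert k {i, j}) - X.baseValue F (insert k' {i, j}) = x + y + z := by ring
  rw [this]
  nlinarith [sq_nonneg (x - y), sq_nonneg (y - z), sq_nonneg (x - z)]

theorem sum_extremalEnergy_le :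
    ∑ S ∈ powersetCard 3 univ, X.extremalEnergy F S ≤ 2 * ∑ x ∈ X.darts, flipEnergy F x := by
  have h : ∀ ε : Bool, ∑ S ∈ powersetCard 3 univ, ∑ k ∈ S,
      flipEnergy F (X.octant S (fun i => X.up S i ^^ ε), k) ≤ ∑ x ∈ X.darts, flipEnergy F x := by
    intro ε
    rw [Finset.sum_sigma']
    refine sum_comp_le_of_injOn (φ := flipEnergy F)
      (g := fun p : (_ : Finset (Fin n)) × Fin n =>
        (X.octant p.1 (fun i => X.up p.1 i ^^ ε), p.2)) ?_ ?_ (fun _ _ => flipEnergy_nonneg _ _)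
    · rintro ⟨S, k⟩ hp
      simp only [Finset.mem_sigma, Finset.mem_powersetCard, Finset.subset_univ, true_and] at hp
      exact octant_mem_darts hp.1 _ hp.2
    · rintro ⟨S, k⟩ hp ⟨S', k'⟩ hp' heq
      simp only [Finset.coe_sigma, Set.mem_sigma_iff, Finset.mem_coe, Finset.mem_powersetCard,
        Finset.subset_univ, true_and] at hp hp'
      simp only [Prod.mk.injEq] at heq
      obtain rfl := X.extremal_unique ε S S' hp.1 hp'.1 heq.1
      rw [heq.2]
  calc _ = ∑ ε : Bool, ∑ S ∈ powersetCard 3 univ, ∑ k ∈ S,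
      flipEnergy F (X.octant S (fun i => X.up S i ^^ ε), k) := by
        rw [Finset.sum_comm]
        refine Finset.sum_congr rfl fun S _ => ?_
        rw [extremalEnergy, Finset.sum_comm]
    _ ≤ ∑ _ε : Bool, ∑ x ∈ X.darts, flipEnergy F x := Finset.sum_le_sum fun ε _ => h ε
    _ = _ := by simp

theorem three_mul_choose_le_card_darts : 3 * n.choose 3 ≤ #X.darts := by
  have h : #((powersetCard 3 (univ : Finset (Fin n))).sigma fun S => S) ≤ #X.darts := by
    refine Finset.card_le_card_of_injOn (fun p : (_ : Finset (Fin n)) × Fin n =>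
        (X.octant p.1 (fun i => X.up p.1 i ^^ false), p.2)) ?_ ?_
    · rintro ⟨S, k⟩ hp
      simp only [Finset.coe_sigma, Set.mem_sigma_iff, Finset.mem_coe, Finset.mem_powersetCard,
        Finset.subset_univ, true_and] at hp
      exact octant_mem_darts hp.1 _ hp.2
    · rintro ⟨S, k⟩ hp ⟨S', k'⟩ hp' heq
      simp only [Finset.coe_sigma, Set.mem_sigma_iff, Finset.mem_coe, Finset.mem_powersetCard,
        Finset.subset_univ, true_and] at hp hp'
      simp only [Prod.mk.injEq] at heq
      obtain rfl := X.extremal_unique false S S' hp.1 hp'.1 heq.1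
      rw [heq.2]
  rw [Finset.card_sigma, Finset.sum_congr rfl (g := fun _ => 3) (by
    intro S hS; exact (Finset.mem_powersetCard.1 hS).2), Finset.sum_const,
    Finset.card_powersetCard, Finset.card_univ, Fintype.card_fin, smul_eq_mul] at h
  linarith

theorem sum_localEnergy_le :
    ∑ S ∈ powersetCard 3 univ, X.localEnergy F S ≤ n ^ 2 * ∑ x ∈ X.darts, flipEnergy F x := by
  simp only [localEnergy]
  rw [Finset.sum_sigma']
  rw [Finset.sum_sigma']
  have h := sum_comp_le_of_injOn (s := ((powersetCard 3 (univ : Finset (Fin n))).sigma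
      fun S => S).sigma fun p => p.1.powerset)
    (t := X.darts ×ˢ powersetCard 2 (univ : Finset (Fin n)))
    (φ := fun q => flipEnergy F q.1)
    (g := fun p => ((X.octant p.1.1 (fun i => decide (i ∈ p.2)), p.1.2), p.1.1.erase p.1.2))
    (by
      rintro ⟨⟨S, k⟩, A⟩ hp
      simp only [Finset.mem_sigma, Finset.mem_powersetCard, Finset.subset_univ, true_and] at hp
      refine Finset.mem_product.2 ⟨octant_mem_darts hp.1.1 _ hp.1.2, ?_⟩
      simp [Finset.card_erase_of_mem hp.1.2, hp.1.1])
    (by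
      rintro ⟨⟨S, k⟩, A⟩ hp ⟨⟨S', k'⟩, A'⟩ hp' heq
      simp only [Finset.coe_sigma, Set.mem_sigma_iff, Finset.mem_coe, Finset.mem_powersetCard,
        Finset.subset_univ, true_and, Finset.mem_powerset] at hp hp'
      simp only [Prod.mk.injEq] at heq
      obtain ⟨⟨h1, rfl⟩, h2⟩ := heq
      have hSS : S = S' := by
        rw [← Finset.insert_erase hp.1.2, ← Finset.insert_erase hp'.1.2, h2]
      subst hSS
      have hAA : A = A' := by
        ext i
        by_cases hi : i ∈ S
        · have := congrFun h1 i
          rw [octant_of_mem hi, octant_of_mem hi] at this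
          simpa using this
        · exact ⟨fun h => absurd (hp.2 h) hi, fun h => absurd (hp'.2 h) hi⟩
      rw [hAA])
    (fun _ _ => flipEnergy_nonneg _ _)
  refine h.trans ?_
  rw [Finset.sum_product]
  simp only [Finset.sum_const, Finset.card_powersetCard, Finset.card_univ, Fintype.card_fin,
    nsmul_eq_mul]
  rw [← Finset.mul_sum]
  refine mul_le_mul_of_nonneg_right ?_ (Finset.sum_nonneg fun _ _ => flipEnergy_nonneg _ _)
  exact_mod_cast Nat.choose_le_pow n 2

end VertexSystem
end

noncomputable section

open Finset

theorem sum_triples_le {n : ℕ} {φ : Finset (Fin n) → ℝ} (hφ : ∀ S, 0 ≤ φ S) :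
    ∑ q : Fin n × Fin n × Fin n,
      (if #(insert q.2.2 ({q.1, q.2.1} : Finset (Fin n))) = 3
        then φ (insert q.2.2 {q.1, q.2.1}) else 0) ≤ 27 * ∑ S ∈ powersetCard 3 univ, φ S := by
  rw [← Finset.sum_filter]
  have := sum_comp_le_of_card_fiber_le (s := univ.filter fun q : Fin n × Fin n × Fin n =>
      #(insert q.2.2 ({q.1, q.2.1} : Finset (Fin n))) = 3) (t := powersetCard 3 univ)
    (g := fun q => insert q.2.2 {q.1, q.2.1}) (m := 27) (φ := φ)
    (by
      intro q hq
      simpa [Finset.mem_powersetCard] using hq)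
    (by
      intro S hS
      have hS3 : #S = 3 := (Finset.mem_powersetCard.1 hS).2
      refine (Finset.card_le_card (t := S ×ˢ S ×ˢ S) ?_).trans ?_
      · rintro ⟨a, b, c⟩ hq
        obtain ⟨-, rfl⟩ := Finset.mem_filter.1 hq
        simp
      · simp [Finset.card_product, hS3])
    (fun S _ => hφ S)
  exact_mod_cast this

/-- Exchange of the elements of two triples, one at a time. -/
theorem exists_exchange_order {α : Type*} [DecidableEq α] {S S' : Finset α} (hS : #S = 3)
    (hS' : #S' = 3) : ∃ i j k i' j' k', S = insert k {i, j} ∧ S' = insert i' {j', k'} ∧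
      i ≠ j ∧ i ≠ k ∧ j ≠ k ∧ i' ≠ j' ∧ i' ≠ k' ∧ j' ≠ k' ∧ k' ≠ i ∧ k' ≠ j ∧ j' ≠ i := by
  obtain ⟨i, j, k, hij, hik, hjk, rfl⟩ := Finset.card_eq_three.1 hS
  obtain ⟨k', hk'S, hk'⟩ := Finset.exists_mem_notMem_of_card_lt_card
    (s := ({i, j} : Finset α)) (t := S') (by rw [Finset.card_pair hij, hS']; norm_num)
  have hc2 : #(S'.erase k') = 2 := by rw [Finset.card_erase_of_mem hk'S, hS']
  obtain ⟨j', hj'S, hj'⟩ := Finset.exists_mem_notMem_of_card_lt_card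
    (s := ({i} : Finset α)) (t := S'.erase k') (by rw [Finset.card_singleton, hc2]; norm_num)
  have hc1 : #((S'.erase k').erase j') = 1 := by rw [Finset.card_erase_of_mem hj'S, hc2]
  obtain ⟨i', hi'⟩ := Finset.card_eq_one.1 hc1
  have hi'S : i' ∈ (S'.erase k').erase j' := by rw [hi']; simp
  simp only [Finset.mem_erase] at hi'S hj'S
  simp only [Finset.mem_insert, Finset.mem_singleton, not_or] at hk' hj'
  refine ⟨i, j, k, i', j', k', ?_, ?_, hij, hik, hjk, hi'S.1, hi'S.2.1, hj'S.1, hk'.1, hk'.2, hj'⟩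
  · ext x; simp only [Finset.mem_insert, Finset.mem_singleton]; tauto
  · rw [← Finset.insert_erase hk'S, ← Finset.insert_erase (Finset.mem_erase.2 hj'S), hi']
    ext x; simp only [Finset.mem_insert, Finset.mem_singleton]; tauto

/-- Routing between triples: if a function on triples varies on each line by at most
`27 u + 27 u' + 300 n ∑ w`, its total variation is of the order `n³ ∑ u + n⁵ ∑ w`. -/
theorem sum_sq_sub_triples_le {n : ℕ} {r u w : Finset (Fin n) → ℝ} (hu : ∀ S, 0 ≤ u S)
    (hw : ∀ S, 0 ≤ w S)
    (hr : ∀ i j k k' : Fin n, i ≠ j → k ∉ ({i, j} : Finset (Fin n)) →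
      k' ∉ ({i, j} : Finset (Fin n)) → (r (insert k {i, j}) - r (insert k' {i, j})) ^ 2 ≤
      27 * u (insert k {i, j}) + 27 * u (insert k' {i, j}) +
      300 * n * ∑ l ∈ ({i, j} : Finset (Fin n))ᶜ, w (insert l {i, j})) :
    ∑ S ∈ powersetCard 3 univ, ∑ S' ∈ powersetCard 3 univ, (r S - r S') ^ 2 ≤
      9 * (n : ℝ) ^ 2 * (54 * n * (27 * ∑ S ∈ powersetCard 3 univ, u S) +
        300 * n ^ 3 * (27 * ∑ S ∈ powersetCard 3 univ, w S)) := by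
  classical
  set lifted : (Finset (Fin n) → ℝ) → Fin n → Fin n → Fin n → ℝ := fun φ i j k =>
    if #(insert k ({i, j} : Finset (Fin n))) = 3 then φ (insert k {i, j}) else 0 with hlift
  have lift_nonneg : ∀ φ : Finset (Fin n) → ℝ, (∀ S, 0 ≤ φ S) → ∀ i j k, 0 ≤ lifted φ i j k := by
    intro φ hφ i j k
    simp only [hlift]
    split_ifs
    · exact hφ _
    · exact le_rfl
  have hcard : ∀ i j k : Fin n, i ≠ j → k ∉ ({i, j} : Finset (Fin n)) →
      #(insert k ({i, j} : Finset (Fin n))) = 3 := by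
    intro i j k hij hk
    rw [Finset.card_insert_of_notMem hk, Finset.card_pair hij]
  set B : (Fin n × Fin n × Fin n × Fin n) → ℝ := fun q =>
    27 * lifted u q.1 q.2.1 q.2.2.1 + 27 * lifted u q.1 q.2.1 q.2.2.2 +
      300 * n * ∑ l, lifted w q.1 q.2.1 l with hB
  have B_nonneg : ∀ q, 0 ≤ B q := by
    intro q
    have h1 := lift_nonneg u hu q.1 q.2.1 q.2.2.1
    have h2 := lift_nonneg u hu q.1 q.2.1 q.2.2.2
    have h3 : 0 ≤ ∑ l, lifted w q.1 q.2.1 l :=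
      Finset.sum_nonneg fun l _ => lift_nonneg w hw q.1 q.2.1 l
    simp only [hB]
    positivity
  have leg : ∀ i j k k' : Fin n, i ≠ j → k ≠ i → k ≠ j → k' ≠ i → k' ≠ j →
      (r (insert k {i, j}) - r (insert k' {i, j})) ^ 2 ≤ B (i, j, k, k') := by
    intro i j k k' hij hki hkj hki' hkj'
    have hk : k ∉ ({i, j} : Finset (Fin n)) := by simp [hki, hkj]
    have hk' : k' ∉ ({i, j} : Finset (Fin n)) := by simp [hki', hkj']
    refine (hr i j k k' hij hk hk').trans ?_
    have e1 : lifted u i j k = u (insert k {i, j}) := if_pos (hcard i j k hij hk)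
    have e2 : lifted u i j k' = u (insert k' {i, j}) := if_pos (hcard i j k' hij hk')
    have e3 : ∑ l ∈ ({i, j} : Finset (Fin n))ᶜ, w (insert l {i, j}) ≤ ∑ l, lifted w i j l := by
      rw [Finset.sum_congr rfl (g := lifted w i j) (by
        intro l hl
        exact (if_pos (hcard i j l hij (Finset.mem_compl.1 hl))).symm)]
      exact Finset.sum_le_sum_of_subset_of_nonneg (Finset.subset_univ _)
        fun l _ _ => lift_nonneg w hw i j l
    simp only [hB, e1, e2]
    have : 300 * (n : ℝ) * ∑ l ∈ ({i, j} : Finset (Fin n))ᶜ, w (insert l {i, j})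
        ≤ 300 * n * ∑ l, lifted w i j l := mul_le_mul_of_nonneg_left e3 (by positivity)
    linarith
  have sumB : ∑ q, B q ≤ 54 * n * (27 * ∑ S ∈ powersetCard 3 univ, u S) +
      300 * n ^ 3 * (27 * ∑ S ∈ powersetCard 3 univ, w S) := by
    have hU := sum_triples_le hu
    have hW := sum_triples_le hw
    simp only [Fintype.sum_prod_type] at hU hW
    have e : ∑ q, B q = 54 * n * (∑ i, ∑ j, ∑ k, lifted u i j k) +
        300 * n ^ 3 * ∑ i, ∑ j, ∑ k, lifted w i j k := by
      simp only [hB, Fintype.sum_prod_type, Finset.sum_add_distrib, Finset.sum_const,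
        ← Finset.mul_sum, Finset.card_univ, Fintype.card_fin, Fintype.card_prod, nsmul_eq_mul]
      push_cast
      ring
    rw [e]
    exact add_le_add (mul_le_mul_of_nonneg_left hU (by positivity))
      (mul_le_mul_of_nonneg_left hW (by positivity))
  set g₁ : (Fin n × Fin n × Fin n) × (Fin n × Fin n × Fin n) →
      (Fin n × Fin n × Fin n × Fin n) × (Fin n × Fin n) :=
    fun q => ((q.1.1, q.1.2.1, q.1.2.2, q.2.2.2), (q.2.1, q.2.2.1)) with hg₁
  set g₂ : (Fin n × Fin n × Fin n) × (Fin n × Fin n × Fin n) →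
      (Fin n × Fin n × Fin n × Fin n) × (Fin n × Fin n) :=
    fun q => ((q.1.1, q.2.2.2, q.1.2.1, q.2.2.1), (q.1.2.2, q.2.1)) with hg₂
  set g₃ : (Fin n × Fin n × Fin n) × (Fin n × Fin n × Fin n) →
      (Fin n × Fin n × Fin n × Fin n) × (Fin n × Fin n) :=
    fun q => ((q.2.2.1, q.2.2.2, q.1.1, q.2.1), (q.1.2.1, q.1.2.2)) with hg₃
  have sumg : ∀ g : (Fin n × Fin n × Fin n) × (Fin n × Fin n × Fin n) →
      (Fin n × Fin n × Fin n × Fin n) × (Fin n × Fin n), Function.Injective g →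
      ∑ q, B (g q).1 ≤ (n : ℝ) ^ 2 * ∑ q, B q := by
    intro g hg
    refine (sum_fst_comp_le hg B_nonneg).trans_eq ?_
    simp only [Fintype.card_prod, Fintype.card_fin]
    push_cast
    ring
  have inj₁ : Function.Injective g₁ := by
    rintro ⟨⟨_, _, _⟩, ⟨_, _, _⟩⟩ ⟨⟨_, _, _⟩, ⟨_, _, _⟩⟩ h
    simp only [hg₁, Prod.mk.injEq] at h ⊢
    tauto
  have inj₂ : Function.Injective g₂ := by
    rintro ⟨⟨_, _, _⟩, ⟨_, _, _⟩⟩ ⟨⟨_, _, _⟩, ⟨_, _, _⟩⟩ h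
    simp only [hg₂, Prod.mk.injEq] at h ⊢
    tauto
  have inj₃ : Function.Injective g₃ := by
    rintro ⟨⟨_, _, _⟩, ⟨_, _, _⟩⟩ ⟨⟨_, _, _⟩, ⟨_, _, _⟩⟩ h
    simp only [hg₃, Prod.mk.injEq] at h ⊢
    tauto
  have route : ∀ p : Finset (Fin n) × Finset (Fin n), #p.1 = 3 → #p.2 = 3 →
      ∃ q : (Fin n × Fin n × Fin n) × (Fin n × Fin n × Fin n),
        (p = (insert q.1.2.2 {q.1.1, q.1.2.1}, insert q.2.1 {q.2.2.1, q.2.2.2}) ∧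
        (r p.1 - r p.2) ^ 2 ≤ 3 * (B (g₁ q).1 + B (g₂ q).1 + B (g₃ q).1)) := by
    rintro ⟨S, S'⟩ hS hS'
    obtain ⟨i, j, k, i', j', k', rfl, rfl, hij, hik, hjk, hij', hik', hjk', h1, h2, h3⟩ :=
      exists_exchange_order hS hS'
    refine ⟨((i, j, k), (i', j', k')), rfl, ?_⟩
    have l1 := leg i j k k' hij hik.symm hjk.symm h1 h2
    have l2 := leg i k' j j' h1.symm hij.symm h2.symm h3 hjk'
    have l3 := leg j' k' i i' hjk' h3.symm h1.symm hij' hik'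
    have s1 : insert k' ({i, j} : Finset (Fin n)) = insert j {i, k'} := by
      ext x; simp only [Finset.mem_insert, Finset.mem_singleton]; tauto
    have s2 : insert j' ({i, k'} : Finset (Fin n)) = insert i {j', k'} := by
      ext x; simp only [Finset.mem_insert, Finset.mem_singleton]; tauto
    rw [s1] at l1
    rw [s2] at l2
    set x := r (insert k {i, j}) - r (insert j {i, k'})
    set y := r (insert j {i, k'}) - r (insert i {j', k'})
    set z := r (insert i {j', k'}) - r (insert i' {j', k'})
    have : r (insert k {i, j}) - r (insert i' {j', k'}) = x + y + z := by ring
    simp only [hg₁, hg₂, hg₃]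
    rw [this]
    nlinarith [sq_nonneg (x - y), sq_nonneg (y - z), sq_nonneg (x - z)]
  rcases Nat.eq_zero_or_pos n with hn | hn
  · subst hn
    rw [Finset.powersetCard_eq_empty.2 (by simp)]
    simp
  have : Nonempty (Fin n) := ⟨⟨0, hn⟩⟩
  choose! q hq hqB using route
  have hmem : ∀ p ∈ powersetCard 3 (univ : Finset (Fin n)) ×ˢ
      powersetCard 3 (univ : Finset (Fin n)), #p.1 = 3 ∧ #p.2 = 3 := by
    intro p hp
    simpa [Finset.mem_product, Finset.mem_powersetCard] using hp
  calc _ = ∑ p ∈ powersetCard 3 (univ : Finset (Fin n)) ×ˢ powersetCard 3 (univ : Finset (Fin n)),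
        (r p.1 - r p.2) ^ 2 := (Finset.sum_product _ _ _).symm
    _ ≤ ∑ p ∈ powersetCard 3 (univ : Finset (Fin n)) ×ˢ powersetCard 3 (univ : Finset (Fin n)),
        3 * (B (g₁ (q p)).1 + B (g₂ (q p)).1 + B (g₃ (q p)).1) :=
        Finset.sum_le_sum fun p hp => hqB p (hmem p hp).1 (hmem p hp).2
    _ ≤ ∑ q, 3 * (B (g₁ q).1 + B (g₂ q).1 + B (g₃ q).1) := by
        refine sum_comp_le_of_injOn (g := q) (t := univ)
          (φ := fun q => 3 * (B (g₁ q).1 + B (g₂ q).1 + B (g₃ q).1))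
          (fun _ _ => Finset.mem_univ _) ?_ ?_
        · intro p hp p' hp' h
          rw [hq p (hmem p hp).1 (hmem p hp).2, hq p' (hmem p' hp').1 (hmem p' hp').2, h]
        · intro q _
          have := B_nonneg (g₁ q).1
          have := B_nonneg (g₂ q).1
          have := B_nonneg (g₃ q).1
          positivity
    _ = 3 * (∑ q, B (g₁ q).1 + ∑ q, B (g₂ q).1 + ∑ q, B (g₃ q).1) := by
        rw [← Finset.mul_sum, Finset.sum_add_distrib, Finset.sum_add_distrib]
    _ ≤ 9 * (n : ℝ) ^ 2 * ∑ q, B q := by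
        have := sumg g₁ inj₁
        have := sumg g₂ inj₂
        have := sumg g₃ inj₃
        linarith
    _ ≤ _ := mul_le_mul_of_nonneg_left sumB (by positivity)

namespace VertexSystem

variable {n : ℕ} (X : VertexSystem n)

theorem exists_dart_vertex : ∃ v : (Fin n → Bool) × Fin n → Finset (Fin n),
    ∀ x ∈ X.darts, x.2 ∈ v x ∧ #(v x) = 3 ∧ X.octant (v x) x.1 = x.1 := by
  have h : ∀ x ∈ X.darts, ∃ S : Finset (Fin n), x.2 ∈ S ∧ #S = 3 ∧ X.octant S x.1 = x.1 := by
    intro x hx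
    simp only [darts, Finset.mem_filter, Finset.mem_univ, true_and] at hx
    obtain ⟨S, h1, h2, h3⟩ := X.exists_vertex x.1 x.2 hx.1 hx.2
    exact ⟨S, h1, h2, octant_eq_self h3⟩
  choose! v hv using h
  exact ⟨v, hv⟩

theorem card_dart_fiber_le {v : (Fin n → Bool) × Fin n → Finset (Fin n)}
    (hv : ∀ x ∈ X.darts, x.2 ∈ v x ∧ #(v x) = 3 ∧ X.octant (v x) x.1 = x.1) {S : Finset (Fin n)}
    (hS : #S = 3) : #{x ∈ X.darts | v x = S} ≤ 24 := by
  refine (Finset.card_le_card_of_injOn (t := S.powerset ×ˢ S)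
    (fun x => (S.filter fun i => x.1 i, x.2)) ?_ ?_).trans ?_
  · intro x hx
    obtain ⟨hxd, rfl⟩ := Finset.mem_filter.1 hx
    exact Finset.mem_product.2 ⟨Finset.mem_powerset.2 (Finset.filter_subset _ _), (hv x hxd).1⟩
  · intro x hx y hy hxy
    obtain ⟨hx, hxS⟩ := Finset.mem_filter.1 hx
    obtain ⟨hy, hyS⟩ := Finset.mem_filter.1 hy
    simp only [Prod.mk.injEq] at hxy
    refine Prod.ext ?_ hxy.2
    rw [← (hv x hx).2.2, ← (hv y hy).2.2, hxS, hyS]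
    apply octant_congr
    intro i hi
    have := Finset.ext_iff.1 hxy.1 i
    simp only [Finset.mem_filter, hi, true_and] at this
    exact Bool.eq_iff_iff.2 this
  · rw [Finset.card_product, Finset.card_powerset, hS]
    norm_num

theorem card_darts_le : #X.darts ≤ 24 * n ^ 3 := by
  obtain ⟨v, hv⟩ := X.exists_dart_vertex
  have h := Finset.card_le_mul_card_image_of_maps_to (s := X.darts)
    (t := powersetCard 3 (univ : Finset (Fin n))) (f := v) (by
      intro x hx
      simpa [Finset.mem_powersetCard] using (hv x hx).2.1) 24 (by
      intro S hS
      exact X.card_dart_fiber_le hv (Finset.mem_powersetCard.1 hS).2)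
  refine h.trans (Nat.mul_le_mul_left _ ?_)
  rw [Finset.card_powersetCard, Finset.card_univ, Fintype.card_fin]
  exact Nat.choose_le_pow n 3

/-- The Poincaré inequality on the graph of realizable sign vectors. -/
theorem sum_sq_sub_darts_le (F : (Fin n → Bool) → ℝ) :
    ∑ x ∈ X.darts, ∑ y ∈ X.darts, (F x.1 - F y.1) ^ 2 ≤
      10 ^ 9 * (n : ℝ) ^ 5 * ∑ x ∈ X.darts, flipEnergy F x := by
  obtain ⟨v, hv⟩ := X.exists_dart_vertex
  set E := ∑ x ∈ X.darts, flipEnergy F x with hE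
  set M : ℝ := ((#X.darts : ℕ) : ℝ) with hM
  set T := powersetCard 3 (univ : Finset (Fin n)) with hT
  have hE0 : 0 ≤ E := Finset.sum_nonneg fun _ _ => flipEnergy_nonneg _ _
  have hvT : ∀ x ∈ X.darts, v x ∈ T := by
    intro x hx
    simpa [hT, Finset.mem_powersetCard] using (hv x hx).2.1
  have hfib : ∀ S ∈ T, #{x ∈ X.darts | v x = S} ≤ 24 := fun S hS =>
    X.card_dart_fiber_le hv (Finset.mem_powersetCard.1 hS).2
  have hM24 : M ≤ 24 * n ^ 3 := by
    rw [hM]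
    exact_mod_cast X.card_darts_le
  have hU : ∑ x ∈ X.darts, X.localEnergy F (v x) ≤ 24 * (n ^ 2 * E) := by
    refine (sum_comp_le_of_card_fiber_le hvT hfib (φ := X.localEnergy F)
      fun S _ => X.localEnergy_nonneg F S).trans ?_
    have := sum_localEnergy_le (X := X) (F := F)
    push_cast
    linarith
  have hR : ∑ x ∈ X.darts, ∑ y ∈ X.darts,
      (X.baseValue F (v x) - X.baseValue F (v y)) ^ 2 ≤ 576 * (158922 * n ^ 5 * E) := by
    have h1 : ∀ S, ∑ y ∈ X.darts, (X.baseValue F S - X.baseValue F (v y)) ^ 2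
        ≤ 24 * ∑ S' ∈ T, (X.baseValue F S - X.baseValue F S') ^ 2 := fun S => by
      exact_mod_cast sum_comp_le_of_card_fiber_le hvT hfib
        (φ := fun S' => (X.baseValue F S - X.baseValue F S') ^ 2) fun _ _ => sq_nonneg _
    have h2 := sum_comp_le_of_card_fiber_le hvT hfib
      (φ := fun S => ∑ S' ∈ T, (X.baseValue F S - X.baseValue F S') ^ 2)
      fun _ _ => Finset.sum_nonneg fun _ _ => sq_nonneg _
    have h3 := sum_sq_sub_triples_le (X.localEnergy_nonneg F) (X.extremalEnergy_nonneg F)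
      (r := X.baseValue F) (fun i j k k' => sq_sub_baseValue_le)
    have h4 := sum_localEnergy_le (X := X) (F := F)
    have h5 := sum_extremalEnergy_le (X := X) (F := F)
    rw [← hE] at h4 h5
    rw [← hT] at h3 h4 h5
    have h6 : 9 * (n : ℝ) ^ 2 * (54 * n * (27 * ∑ S ∈ T, X.localEnergy F S) +
        300 * n ^ 3 * (27 * ∑ S ∈ T, X.extremalEnergy F S)) ≤ 158922 * n ^ 5 * E := by
      calc _ ≤ 9 * (n : ℝ) ^ 2 * (54 * n * (27 * (n ^ 2 * E)) + 300 * n ^ 3 * (27 * (2 * E))) := by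
            gcongr
        _ = _ := by ring
    calc _ ≤ ∑ x ∈ X.darts, 24 * ∑ S' ∈ T, (X.baseValue F (v x) - X.baseValue F S') ^ 2 :=
          Finset.sum_le_sum fun x _ => h1 (v x)
      _ ≤ _ := by
          rw [← Finset.mul_sum]
          push_cast at h2
          linarith
  have hpt : ∀ x ∈ X.darts, (F x.1 - X.baseValue F (v x)) ^ 2 ≤ 9 * X.localEnergy F (v x) := by
    intro x hx
    have := sq_sub_octant_le (X := X) (F := F) (hv x hx).2.1 x.1 (fun _ => true)
    rwa [(hv x hx).2.2] at this
  have hsum : ∑ x ∈ X.darts, ∑ y ∈ X.darts, (F x.1 - F y.1) ^ 2 ≤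
      ∑ x ∈ X.darts, ∑ y ∈ X.darts, (27 * X.localEnergy F (v x) + 27 * X.localEnergy F (v y) +
        3 * (X.baseValue F (v x) - X.baseValue F (v y)) ^ 2) := by
    refine Finset.sum_le_sum fun x hx => Finset.sum_le_sum fun y hy => ?_
    have h1 := hpt x hx
    have h2 := hpt y hy
    set a := F x.1 - X.baseValue F (v x)
    set b := F y.1 - X.baseValue F (v y)
    set c := X.baseValue F (v x) - X.baseValue F (v y)
    have : F x.1 - F y.1 = a - b + c := by ring
    rw [this]
    nlinarith [sq_nonneg (a + b), sq_nonneg (a - c), sq_nonneg (b + c)]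
  refine hsum.trans ?_
  have hsplit : ∑ x ∈ X.darts, ∑ y ∈ X.darts, (27 * X.localEnergy F (v x) +
      27 * X.localEnergy F (v y) + 3 * (X.baseValue F (v x) - X.baseValue F (v y)) ^ 2)
      = 54 * M * ∑ x ∈ X.darts, X.localEnergy F (v x) + 3 * ∑ x ∈ X.darts, ∑ y ∈ X.darts,
        (X.baseValue F (v x) - X.baseValue F (v y)) ^ 2 := by
    simp only [Finset.sum_add_distrib, Finset.sum_const, ← Finset.mul_sum, nsmul_eq_mul, ← hM]
    ring
  rw [hsplit]
  have : 54 * M * ∑ x ∈ X.darts, X.localEnergy F (v x)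
      ≤ 54 * (24 * n ^ 3) * (24 * (n ^ 2 * E)) := by
    have : 0 ≤ ∑ x ∈ X.darts, X.localEnergy F (v x) :=
      Finset.sum_nonneg fun _ _ => X.localEnergy_nonneg F _
    gcongr
  have hnE : 0 ≤ (n : ℝ) ^ 5 * E := by positivity
  nlinarith

end VertexSystem
end

noncomputable section

section RandomWalkMixing

open scoped Classical

open Finset Matrix

variable {V : Type*} [Fintype V] (G : SimpleGraph V)

/-- The sum of the values of a function at the neighbours of a vertex. -/
def neighborSum (f : V → ℝ) (v : V) : ℝ := ∑ w, if G.Adj v w then f w else 0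

theorem lazyWalk_mulVec (f : V → ℝ) (v : V) :
    (lazyWalk G *ᵥ f) v = (1 / 2) * (f v + (G.degree v : ℝ)⁻¹ * neighborSum G f v) := by
  rw [lazyWalk, Matrix.smul_mulVec, Matrix.add_mulVec, Matrix.one_mulVec, ← Matrix.mulVec_mulVec]
  simp only [Pi.smul_apply, Pi.add_apply, Matrix.mulVec_diagonal, smul_eq_mul, neighborSum]
  congr 3
  simp [Matrix.mulVec, dotProduct, SimpleGraph.adjMatrix_apply]

theorem neighborSum_const (c : ℝ) (v : V) : neighborSum G (fun _ => c) v = G.degree v * c := by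
  rw [neighborSum, ← Finset.sum_filter, Finset.sum_const, nsmul_eq_mul,
    ← SimpleGraph.card_neighborFinset_eq_degree, SimpleGraph.neighborFinset_eq_filter]

theorem sum_mul_neighborSum (f g : V → ℝ) :
    ∑ v, f v * neighborSum G g v = ∑ v, neighborSum G f v * g v := by
  simp only [neighborSum, Finset.mul_sum, Finset.sum_mul]
  rw [Finset.sum_comm]
  refine Finset.sum_congr rfl fun v _ => Finset.sum_congr rfl fun w _ => ?_
  rw [G.adj_comm]
  split_ifs <;> ring

theorem sum_neighborSum (f : V → ℝ) : ∑ v, neighborSum G f v = ∑ v, G.degree v * f v := by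
  have h := sum_mul_neighborSum G (fun _ => 1) f
  simpa [neighborSum_const] using h

theorem sq_neighborSum_le (f : V → ℝ) (v : V) :
    (neighborSum G f v) ^ 2 ≤ G.degree v * neighborSum G (fun w => f w ^ 2) v := by
  simp only [neighborSum, ← Finset.sum_filter]
  have := sq_sum_le_card_mul_sum_sq (s := univ.filter fun w => G.Adj v w) (f := f)
  rw [← SimpleGraph.neighborFinset_eq_filter, SimpleGraph.card_neighborFinset_eq_degree] at this
  rwa [← SimpleGraph.neighborFinset_eq_filter]

/-- The squared increments of `f` along the edges (each counted twice). -/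
def dirichlet (f : V → ℝ) : ℝ := ∑ v, ∑ w, if G.Adj v w then (f v - f w) ^ 2 else 0

theorem dirichlet_eq (f : V → ℝ) : dirichlet G f =
    2 * (∑ v, G.degree v * f v ^ 2 - ∑ v, f v * neighborSum G f v) := by
  have h1 : ∀ v, ∑ w, (if G.Adj v w then (f v - f w) ^ 2 else 0) = G.degree v * f v ^ 2
      - 2 * (f v * neighborSum G f v) + neighborSum G (fun w => f w ^ 2) v := by
    intro v
    rw [← neighborSum_const]
    simp only [neighborSum, Finset.mul_sum]
    rw [← Finset.sum_sub_distrib, ← Finset.sum_add_distrib]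
    refine Finset.sum_congr rfl fun w _ => ?_
    split_ifs <;> ring
  rw [dirichlet, Finset.sum_congr rfl fun v _ => h1 v, Finset.sum_add_distrib,
    Finset.sum_sub_distrib, sum_neighborSum, ← Finset.mul_sum]
  ring

variable {G}

theorem sum_degree_mul_lazyWalk (hd : ∀ v, 0 < G.degree v) (f : V → ℝ) :
    ∑ v, G.degree v * (lazyWalk G *ᵥ f) v = ∑ v, G.degree v * f v := by
  have h : ∀ v, (G.degree v : ℝ) * (lazyWalk G *ᵥ f) v
      = (1 / 2) * (G.degree v * f v + neighborSum G f v) := by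
    intro v
    have : (G.degree v : ℝ) ≠ 0 := by exact_mod_cast (hd v).ne'
    rw [lazyWalk_mulVec]
    field_simp
  rw [Finset.sum_congr rfl fun v _ => h v, ← Finset.mul_sum, Finset.sum_add_distrib,
    sum_neighborSum]
  ring

theorem sum_degree_mul_lazyWalk_sq_le (hd : ∀ v, 0 < G.degree v) (f : V → ℝ) :
    ∑ v, G.degree v * (lazyWalk G *ᵥ f) v ^ 2 ≤
      ∑ v, G.degree v * f v ^ 2 - (1 / 4) * dirichlet G f := by
  have h : ∀ v, (G.degree v : ℝ) * (lazyWalk G *ᵥ f) v ^ 2 ≤ (1 / 4) * (G.degree v * f v ^ 2) +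
      (1 / 2) * (f v * neighborSum G f v) + (1 / 4) * neighborSum G (fun w => f w ^ 2) v := by
    intro v
    have h0 : (0 : ℝ) < G.degree v := by exact_mod_cast hd v
    have h1 : (G.degree v : ℝ)⁻¹ * neighborSum G f v ^ 2 ≤ neighborSum G (fun w => f w ^ 2) v := by
      rw [inv_mul_le_iff₀ h0]
      exact sq_neighborSum_le G f v
    rw [lazyWalk_mulVec]
    calc _ = (1 / 4) * (G.degree v * f v ^ 2) + (1 / 2) * (f v * neighborSum G f v)
          + (1 / 4) * ((G.degree v : ℝ)⁻¹ * neighborSum G f v ^ 2) := by field_simp; ring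
      _ ≤ _ := by linarith
  refine (Finset.sum_le_sum fun v _ => h v).trans ?_
  rw [dirichlet_eq, Finset.sum_add_distrib, Finset.sum_add_distrib, ← Finset.mul_sum,
    ← Finset.mul_sum, ← Finset.mul_sum, sum_neighborSum]
  linarith

theorem sum_sum_degree_mul_sq_sub {f : V → ℝ} (hf : ∑ v, G.degree v * f v = 0) :
    ∑ v, ∑ w, (G.degree v * G.degree w : ℝ) * (f v - f w) ^ 2 =
      2 * (∑ v, (G.degree v : ℝ)) * ∑ v, G.degree v * f v ^ 2 := by
  have h : ∀ v w, (G.degree v * G.degree w : ℝ) * (f v - f w) ^ 2 =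
      (G.degree v * f v ^ 2) * G.degree w + G.degree v * (G.degree w * f w ^ 2)
        - 2 * ((G.degree v * f v) * (G.degree w * f w)) := by
    intro v w; ring
  simp only [h, Finset.sum_sub_distrib, Finset.sum_add_distrib, ← Finset.mul_sum,
    ← Finset.sum_mul, hf]
  ring

/-- One step of the lazy walk contracts functions of mean zero. -/
theorem sum_degree_mul_lazyWalk_sq_le_exp (hd : ∀ v, 0 < G.degree v) {Λ : ℝ} (hΛ : 0 < Λ)
    (hP : ∀ f : V → ℝ, ∑ v, ∑ w, (G.degree v * G.degree w : ℝ) * (f v - f w) ^ 2 ≤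
      Λ * dirichlet G f) {f : V → ℝ} (hf : ∑ v, G.degree v * f v = 0) :
    ∑ v, G.degree v * (lazyWalk G *ᵥ f) v ^ 2 ≤
      Real.exp (-((∑ v, (G.degree v : ℝ)) / (2 * Λ))) * ∑ v, G.degree v * f v ^ 2 := by
  refine (sum_degree_mul_lazyWalk_sq_le hd f).trans ?_
  have h1 := hP f
  rw [sum_sum_degree_mul_sq_sub hf] at h1
  set M := ∑ v, (G.degree v : ℝ)
  set N := ∑ v, G.degree v * f v ^ 2
  have hN : 0 ≤ N := Finset.sum_nonneg fun v _ => by positivity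
  have h2 : 2 * M * N / Λ ≤ dirichlet G f := by
    rw [div_le_iff₀ hΛ]; linarith
  have h3 := Real.add_one_le_exp (-(M / (2 * Λ)))
  have h4 := mul_le_mul_of_nonneg_right h3 hN
  have h5 : 2 * M * N / Λ = 4 * (M / (2 * Λ) * N) := by field_simp; ring
  rw [h5] at h2
  linarith

theorem sum_degree_mul_lazyWalk_pow_sq_le_exp (hd : ∀ v, 0 < G.degree v) {Λ : ℝ} (hΛ : 0 < Λ)
    (hP : ∀ f : V → ℝ, ∑ v, ∑ w, (G.degree v * G.degree w : ℝ) * (f v - f w) ^ 2 ≤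
      Λ * dirichlet G f) {f : V → ℝ} (hf : ∑ v, G.degree v * f v = 0) (t : ℕ) :
    ∑ v, G.degree v * (lazyWalk G ^ t *ᵥ f) v = 0 ∧
    ∑ v, G.degree v * (lazyWalk G ^ t *ᵥ f) v ^ 2 ≤
      Real.exp (-(t * ((∑ v, (G.degree v : ℝ)) / (2 * Λ)))) * ∑ v, G.degree v * f v ^ 2 := by
  induction t with
  | zero => simp [hf]
  | succ t ih =>
    have e : lazyWalk G ^ (t + 1) *ᵥ f = lazyWalk G *ᵥ (lazyWalk G ^ t *ᵥ f) := by
      rw [Matrix.mulVec_mulVec, ← pow_succ']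
    rw [e]
    refine ⟨by rw [sum_degree_mul_lazyWalk hd, ih.1], ?_⟩
    refine (sum_degree_mul_lazyWalk_sq_le_exp hd hΛ hP ih.1).trans ?_
    refine (mul_le_mul_of_nonneg_left ih.2 (Real.exp_pos _).le).trans_eq ?_
    rw [← mul_assoc, ← Real.exp_add]
    congr 2
    push_cast
    ring

theorem lazyWalk_pow_mulVec_const (hd : ∀ v, 0 < G.degree v) (c : ℝ) (t : ℕ) :
    lazyWalk G ^ t *ᵥ (fun _ => c) = fun _ => c := by
  induction t with
  | zero => simp
  | succ t ih =>
    rw [pow_succ', ← Matrix.mulVec_mulVec, ih]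
    funext v
    have : (G.degree v : ℝ) ≠ 0 := by exact_mod_cast (hd v).ne'
    rw [lazyWalk_mulVec, neighborSum_const]
    field_simp
    ring

theorem tvDist_lazyWalk_pow_le (hd : ∀ v, 0 < G.degree v) {Λ : ℝ} (hΛ : 0 < Λ)
    (hP : ∀ f : V → ℝ, ∑ v, ∑ w, (G.degree v * G.degree w : ℝ) * (f v - f w) ^ 2 ≤
      Λ * dirichlet G f) (t : ℕ) (x : V) :
    tvDist ((lazyWalk G ^ t) x) (stationary G) ≤ (1 / 2) *
      √((∑ v, (G.degree v : ℝ)) * Real.exp (-(t * ((∑ v, (G.degree v : ℝ)) / (2 * Λ))))) := by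
  set M := ∑ v, (G.degree v : ℝ) with hM
  have hdx : (1 : ℝ) ≤ G.degree x := by exact_mod_cast hd x
  have hM0 : 0 < M := by
    refine lt_of_lt_of_le (by linarith : (0 : ℝ) < G.degree x) ?_
    exact Finset.single_le_sum (f := fun v => (G.degree v : ℝ)) (fun v _ => by positivity)
      (Finset.mem_univ x)
  set g : V → ℝ := fun v => if 0 ≤ (lazyWalk G ^ t) x v - stationary G v then 1 else -1 with hg
  set m : ℝ := (∑ v, G.degree v * g v) / M with hm
  set f : V → ℝ := fun v => g v - m with hf
  have hg2 : ∀ v, g v ^ 2 = 1 := by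
    intro v
    simp only [hg]
    split_ifs <;> norm_num
  have hdg : ∑ v, G.degree v * g v = M * m := by rw [hm]; field_simp
  have hf0 : ∑ v, G.degree v * f v = 0 := by
    simp only [hf, mul_sub, Finset.sum_sub_distrib, ← Finset.sum_mul]
    rw [hdg, ← hM]; ring
  have hf2 : ∑ v, G.degree v * f v ^ 2 ≤ M := by
    have : ∀ v, G.degree v * f v ^ 2
        = G.degree v - 2 * m * (G.degree v * g v) + G.degree v * m ^ 2 := by
      intro v
      have := hg2 v
      simp only [hf]
      linear_combination (G.degree v : ℝ) * this
    rw [Finset.sum_congr rfl fun v _ => this v, Finset.sum_add_distrib, Finset.sum_sub_distrib,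
      ← Finset.mul_sum, hdg, ← Finset.sum_mul, ← hM]
    nlinarith [mul_nonneg hM0.le (sq_nonneg m)]
  have hsum : ∑ v, |(lazyWalk G ^ t) x v - stationary G v| = (lazyWalk G ^ t *ᵥ f) x := by
    have e1 : (lazyWalk G ^ t *ᵥ f) x = (lazyWalk G ^ t *ᵥ g) x - m := by
      have : f = g - fun _ => m := rfl
      rw [this, Matrix.mulVec_sub, lazyWalk_pow_mulVec_const hd]
      rfl
    have e2 : m = ∑ v, stationary G v * g v := by
      rw [hm, Finset.sum_div]
      refine Finset.sum_congr rfl fun v _ => ?_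
      rw [stationary]; ring
    rw [e1, e2, Matrix.mulVec, dotProduct, ← Finset.sum_sub_distrib]
    refine Finset.sum_congr rfl fun v _ => ?_
    rw [← sub_mul]
    simp only [hg]
    split_ifs with h
    · rw [abs_of_nonneg h, mul_one]
    · rw [abs_of_neg (not_le.1 h)]; ring
  have hbound := (sum_degree_mul_lazyWalk_pow_sq_le_exp hd hΛ hP hf0 t).2
  have hx : (lazyWalk G ^ t *ᵥ f) x ^ 2 ≤ ∑ v, G.degree v * (lazyWalk G ^ t *ᵥ f) v ^ 2 := by
    refine le_trans ?_ (Finset.single_le_sum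
      (f := fun v => (G.degree v : ℝ) * (lazyWalk G ^ t *ᵥ f) v ^ 2)
      (fun v _ => by positivity) (Finset.mem_univ x))
    exact le_mul_of_one_le_left (sq_nonneg _) hdx
  have hle : (lazyWalk G ^ t *ᵥ f) x ^ 2 ≤ M * Real.exp (-(t * (M / (2 * Λ)))) := by
    refine hx.trans (hbound.trans ?_)
    rw [mul_comm]
    exact mul_le_mul_of_nonneg_right hf2 (Real.exp_pos _).le
  rw [tvDist, hsum]
  exact mul_le_mul_of_nonneg_left ((le_abs_self _).trans (Real.abs_le_sqrt hle)) (by norm_num)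

theorem tvDist_lazyWalk_pow_le_of_le (hd : ∀ v, 0 < G.degree v) {Λ : ℝ} (hΛ : 0 < Λ)
    (hP : ∀ f : V → ℝ, ∑ v, ∑ w, (G.degree v * G.degree w : ℝ) * (f v - f w) ^ 2 ≤
      Λ * dirichlet G f) {ε : ℝ} (hε : 0 < ε) {t : ℕ}
    (ht : 2 * Λ * Real.log ((∑ v, (G.degree v : ℝ)) / ε ^ 2) ≤ t * ∑ v, (G.degree v : ℝ)) (x : V) :
    tvDist ((lazyWalk G ^ t) x) (stationary G) ≤ ε := by
  refine (tvDist_lazyWalk_pow_le hd hΛ hP t x).trans ?_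
  set M := ∑ v, (G.degree v : ℝ) with hM
  have hdx : (1 : ℝ) ≤ G.degree x := by exact_mod_cast hd x
  have hM0 : 0 < M := by
    refine lt_of_lt_of_le (by linarith : (0 : ℝ) < G.degree x) ?_
    exact Finset.single_le_sum (f := fun v => (G.degree v : ℝ)) (fun v _ => by positivity)
      (Finset.mem_univ x)
  clear_value M
  have hε2 : 0 < ε ^ 2 := pow_pos hε 2
  have h1 : Real.log (M / ε ^ 2) ≤ t * (M / (2 * Λ)) := by
    rw [← mul_div_assoc, le_div_iff₀ (mul_pos two_pos hΛ)]
    linarith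
  have h2 : M * Real.exp (-(t * (M / (2 * Λ)))) ≤ ε ^ 2 := by
    calc _ ≤ M * Real.exp (-Real.log (M / ε ^ 2)) := by gcongr
      _ = ε ^ 2 := by
        rw [Real.exp_neg, Real.exp_log (div_pos hM0 hε2)]
        field_simp
  have h3 : √(M * Real.exp (-(t * (M / (2 * Λ))))) ≤ ε := by
    rw [Real.sqrt_le_left hε.le]
    exact h2
  linarith [Real.sqrt_nonneg (M * Real.exp (-(t * (M / (2 * Λ)))))]

theorem tvDist_lazyWalk_pow_zero_le (hd : ∀ v, 0 < G.degree v)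
    (hM : ∑ v, (G.degree v : ℝ) ≤ 2) (x : V) :
    tvDist ((lazyWalk G ^ 0) x) (stationary G) ≤ 1 / 2 := by
  set M := ∑ v, (G.degree v : ℝ) with hMdef
  have hdx : (1 : ℝ) ≤ G.degree x := by exact_mod_cast hd x
  have hxM : (G.degree x : ℝ) ≤ M :=
    Finset.single_le_sum (f := fun v => (G.degree v : ℝ)) (fun v _ => by positivity)
      (Finset.mem_univ x)
  have hM0 : 0 < M := by linarith
  have hs : ∑ v, stationary G v = 1 := by
    simp only [stationary, ← Finset.sum_div]
    exact div_self hM0.ne'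
  have hs0 : ∀ v, 0 ≤ stationary G v := fun v =>
    div_nonneg (Nat.cast_nonneg _) hM0.le
  have hsx : 1 / 2 ≤ stationary G x := by
    rw [stationary, ← hMdef, le_div_iff₀ hM0]
    linarith
  have hsum : ∑ v, |(lazyWalk G ^ 0) x v - stationary G v| = 2 * (1 - stationary G x) := by
    rw [← Finset.add_sum_erase _ _ (Finset.mem_univ x)] at hs ⊢
    rw [Finset.sum_congr rfl (g := fun v => stationary G v) (by
      intro v hv
      have : x ≠ v := (Finset.ne_of_mem_erase hv).symm
      rw [pow_zero, Matrix.one_apply_ne this, zero_sub, abs_neg, abs_of_nonneg (hs0 v)])]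
    rw [pow_zero, Matrix.one_apply_eq]
    have hle : stationary G x ≤ 1 := by
      have := Finset.sum_nonneg (s := univ.erase x) fun v _ => hs0 v
      linarith
    rw [abs_of_nonneg (by linarith)]
    linarith
  rw [tvDist, hsum]
  linarith

end RandomWalkMixing
end

noncomputable section

open Finset

theorem flipAt_injective {n : ℕ} (σ : Fin n → Bool) : Function.Injective (flipAt σ) := by
  intro k k' h
  by_contra hne
  have := congrFun h k
  rw [flipAt_self, flipAt_of_ne _ hne] at this
  simp at this

theorem sum_sq_sub_le_of_le_two {n : ℕ} (hn : n ≤ 2) (F : (Fin n → Bool) → ℝ)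
    (σ τ : Fin n → Bool) : (F σ - F τ) ^ 2 ≤ 4 * ∑ x, flipEnergy F x := by
  have step : ∀ (σ τ : Fin n → Bool) (k : Fin n), (∀ i, i ≠ k → σ i = τ i) →
      (F σ - F τ) ^ 2 ≤ ∑ x, flipEnergy F x := by
    intro σ τ k h
    by_cases hk : σ k = τ k
    · have : σ = τ := funext fun i => by
        by_cases hi : i = k
        · rw [hi, hk]
        · exact h i hi
      rw [this]
      simpa using Finset.sum_nonneg fun x (_ : x ∈ univ) => flipEnergy_nonneg F x
    · have : flipAt σ k = τ := funext fun i => by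
        by_cases hi : i = k
        · subst hi
          rw [flipAt_self]
          cases h1 : σ i <;> cases h2 : τ i <;> simp_all
        · rw [flipAt_of_ne _ hi, h i hi]
      rw [← this]
      exact Finset.single_le_sum (f := flipEnergy F) (fun x _ => flipEnergy_nonneg F x)
        (Finset.mem_univ (σ, k))
  have hE : 0 ≤ ∑ x, flipEnergy F x :=
    Finset.sum_nonneg fun x _ => flipEnergy_nonneg F x
  interval_cases n
  · have : σ = τ := Subsingleton.elim _ _
    rw [this]
    linarith
  · have := step σ τ 0 (fun i hi => absurd (Subsingleton.elim i 0) hi)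
    linarith
  · set ρ := Function.update σ 0 (τ 0)
    have h1 := step σ ρ 0 (fun i hi => by simp [ρ, hi])
    have h2 := step ρ τ 1 (fun i hi => by
      have : i = 0 := by omega
      simp [ρ, this])
    set x := F σ - F ρ
    set y := F ρ - F τ
    have : F σ - F τ = x + y := by ring
    rw [this]
    nlinarith [sq_nonneg (x - y)]

namespace Arrangement

variable {n : ℕ} {𝓗 : Arrangement 3 n}

open Classical in
variable (𝓗) in
/-- The directed edges of the chamber graph in terms of sign vectors. -/
def darts : Finset ((Fin n → Bool) × Fin n) :=
  univ.filter fun x => 𝓗.Realizable x.1 ∧ 𝓗.Realizable (flipAt x.1 x.2)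

theorem mem_darts {x : (Fin n → Bool) × Fin n} :
    x ∈ 𝓗.darts ↔ 𝓗.Realizable x.1 ∧ 𝓗.Realizable (flipAt x.1 x.2) := by
  simp [darts]

theorem GeneralPosition.realizable_of_le (hg : 𝓗.GeneralPosition) (hn : n ≤ 3)
    (σ : Fin n → Bool) : 𝓗.Realizable σ := by
  have hc : #(univ : Finset (Fin n)) ≤ 3 := by simpa using hn
  obtain ⟨x, hx⟩ := hg.exists_common_point hc
  have := hg.realizable_piecewise hc hx (by simp) σ
  rwa [Finset.piecewise_univ] at this

theorem GeneralPosition.darts_eq_univ (hg : 𝓗.GeneralPosition) (hn : n ≤ 3) :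
    𝓗.darts = univ := by
  ext x
  simp [mem_darts, hg.realizable_of_le hn]

theorem GeneralPosition.card_darts_of_le (hg : 𝓗.GeneralPosition) (hn : n ≤ 3) :
    #𝓗.darts = 2 ^ n * n := by
  rw [hg.darts_eq_univ hn]
  simp

theorem GeneralPosition.darts_vertexSystem (hg : 𝓗.GeneralPosition) (hn : 3 ≤ n) :
    (hg.vertexSystem hn).darts = 𝓗.darts := rfl

theorem GeneralPosition.card_darts_le (hg : 𝓗.GeneralPosition) (hn : 1 ≤ n) :
    #𝓗.darts ≤ 24 * n ^ 3 := by
  rcases le_or_gt 3 n with h | h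
  · exact (hg.vertexSystem h).card_darts_le
  · rw [hg.card_darts_of_le h.le]
    interval_cases n <;> norm_num

theorem GeneralPosition.pow_three_le_card_darts (hg : 𝓗.GeneralPosition) (hn : 1 ≤ n) :
    n ^ 3 ≤ 9 * #𝓗.darts := by
  rcases le_or_gt 3 n with h | h
  · have h1 := (hg.vertexSystem h).three_mul_choose_le_card_darts
    rw [hg.darts_vertexSystem h] at h1
    obtain ⟨m, rfl⟩ := Nat.exists_eq_add_of_le' h
    have h2 : (m + 3).choose 3 * 6 = (m + 3) * (m + 2) * (m + 1) := by
      have := Nat.descFactorial_eq_factorial_mul_choose (m + 3) 3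
      simp [Nat.descFactorial, Nat.factorial] at this
      linarith
    have h3 : 27 * ((m + 3) * (m + 2) * (m + 1))
        = 6 * (m + 3) ^ 3 + (m + 3) * (21 * m ^ 2 + 45 * m) := by ring
    have h4 : 0 ≤ (m + 3) * (21 * m ^ 2 + 45 * m) := Nat.zero_le _
    omega
  · rw [hg.card_darts_of_le h.le]
    interval_cases n <;> norm_num

/-- The Poincaré inequality on the sign vectors of the chambers. -/
theorem GeneralPosition.sum_sq_sub_darts_le (hg : 𝓗.GeneralPosition) (hn : 1 ≤ n)
    (F : (Fin n → Bool) → ℝ) : ∑ x ∈ 𝓗.darts, ∑ y ∈ 𝓗.darts, (F x.1 - F y.1) ^ 2 ≤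
      10 ^ 9 * (n : ℝ) ^ 5 * ∑ x ∈ 𝓗.darts, flipEnergy F x := by
  rcases le_or_gt 3 n with h | h
  · exact (hg.vertexSystem h).sum_sq_sub_darts_le F
  · rw [hg.darts_eq_univ h.le]
    have hE : 0 ≤ ∑ x, flipEnergy F x :=
      Finset.sum_nonneg fun x _ => flipEnergy_nonneg F x
    calc _ ≤ ∑ _x : (Fin n → Bool) × Fin n, ∑ _y : (Fin n → Bool) × Fin n,
          4 * ∑ x, flipEnergy F x :=
          Finset.sum_le_sum fun x _ => Finset.sum_le_sum fun y _ =>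
            sum_sq_sub_le_of_le_two (by omega) F x.1 y.1
      _ = ((2 ^ n * n : ℕ) : ℝ) ^ 2 * 4 * ∑ x, flipEnergy F x := by
          simp only [Finset.sum_const, Finset.card_univ, Fintype.card_prod, Fintype.card_fun,
            Fintype.card_bool, Fintype.card_fin, nsmul_eq_mul]
          ring
      _ ≤ _ := by
          refine mul_le_mul_of_nonneg_right ?_ hE
          interval_cases n <;> norm_num

theorem GeneralPosition.exists_realizable_flipAt (hg : 𝓗.GeneralPosition) (hn : 1 ≤ n)
    {σ : Fin n → Bool} (h : 𝓗.Realizable σ) : ∃ k, 𝓗.Realizable (flipAt σ k) := by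
  rcases le_or_gt 3 n with h3 | h3
  · obtain ⟨S, hS, hσ⟩ := hg.exists_vertex_of_realizable h3 h
    obtain ⟨k, hk⟩ : S.Nonempty := by
      rw [← Finset.card_pos, hS]; norm_num
    have : σ = (hg.vertexSystem h3).octant S σ := (VertexSystem.octant_eq_self hσ).symm
    have hd := VertexSystem.octant_mem_darts (X := hg.vertexSystem h3) hS σ hk
    rw [← this, hg.darts_vertexSystem h3, mem_darts] at hd
    exact ⟨k, hd.2⟩
  · exact ⟨⟨0, hn⟩, hg.realizable_of_le h3.le _⟩

section

open Classical

/-- Sums over adjacent pairs of chambers as sums over sign vectors. -/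
theorem GeneralPosition.sum_adj_eq (hg : 𝓗.GeneralPosition) (φ : 𝓗.chambers → 𝓗.chambers → ℝ)
    (Φ : (Fin n → Bool) × Fin n → ℝ)
    (h : ∀ C C' k, 𝓗.side C' = flipAt (𝓗.side C) k → φ C C' = Φ (𝓗.side C, k)) :
    ∑ C, ∑ C', (if 𝓗.chamberGraph.Adj C C' then φ C C' else 0) = ∑ x ∈ 𝓗.darts, Φ x := by
  rw [← Fintype.sum_prod_type' (f := fun C C' => if 𝓗.chamberGraph.Adj C C' then φ C C' else 0),
    ← Finset.sum_filter]
  symm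
  refine Finset.sum_bij (fun x hx =>
    (𝓗.chamberOf (mem_darts.1 hx).1, 𝓗.chamberOf (mem_darts.1 hx).2)) ?_ ?_ ?_ ?_
  · intro x hx
    simp only [Finset.mem_filter, Finset.mem_univ, true_and]
    exact 𝓗.chamberGraph_adj_of_side_eq_flipAt (k := x.2) (by simp)
  · intro x hx y hy hxy
    simp only [Prod.mk.injEq] at hxy
    have h1 := congrArg 𝓗.side hxy.1
    have h2 := congrArg 𝓗.side hxy.2
    simp only [side_chamberOf] at h1 h2
    rw [h1] at h2
    exact Prod.ext h1 (flipAt_injective _ h2)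
  · rintro ⟨C, C'⟩ hC
    simp only [Finset.mem_filter, Finset.mem_univ, true_and] at hC
    obtain ⟨k, hk⟩ := 𝓗.exists_side_eq_flipAt_of_adj (hg.eq_of_hyperplane_le (by norm_num)) hC
    have h1 := 𝓗.realizable_side C
    have h2 := 𝓗.realizable_side C'
    rw [hk] at h2
    refine ⟨(𝓗.side C, k), mem_darts.2 ⟨h1, h2⟩, Prod.ext ?_ ?_⟩
    · exact 𝓗.side_injective (by simp)
    · exact 𝓗.side_injective (by simp [hk])
  · intro x hx
    rw [h _ _ x.2 (by simp)]
    simp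

theorem GeneralPosition.sum_degree_mul_eq (hg : 𝓗.GeneralPosition) (φ : 𝓗.chambers → ℝ)
    (Φ : (Fin n → Bool) → ℝ) (h : ∀ C, φ C = Φ (𝓗.side C)) :
    ∑ C, (𝓗.chamberGraph.degree C : ℝ) * φ C = ∑ x ∈ 𝓗.darts, Φ x.1 := by
  rw [← hg.sum_adj_eq (fun C _ => φ C) (fun x => Φ x.1) (fun C _ _ _ => h C)]
  exact Finset.sum_congr rfl fun C _ => (neighborSum_const 𝓗.chamberGraph (φ C) C).symm

theorem GeneralPosition.sum_degree_eq (hg : 𝓗.GeneralPosition) :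
    ∑ C, (𝓗.chamberGraph.degree C : ℝ) = ((#𝓗.darts : ℕ) : ℝ) := by
  simpa using hg.sum_degree_mul_eq (fun _ => 1) (fun _ => 1) (fun _ => rfl)

theorem GeneralPosition.degree_pos (hg : 𝓗.GeneralPosition) (hn : 1 ≤ n) (C : 𝓗.chambers) :
    0 < 𝓗.chamberGraph.degree C := by
  rw [SimpleGraph.degree_pos_iff_exists_adj]
  obtain ⟨k, hk⟩ := hg.exists_realizable_flipAt hn (𝓗.realizable_side C)
  exact ⟨𝓗.chamberOf hk, 𝓗.chamberGraph_adj_of_side_eq_flipAt (k := k) (by simp)⟩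

/-- The Poincaré inequality on the chamber graph. -/
theorem GeneralPosition.poincare (hg : 𝓗.GeneralPosition) (hn : 1 ≤ n) (f : 𝓗.chambers → ℝ) :
    ∑ C, ∑ C', (𝓗.chamberGraph.degree C * 𝓗.chamberGraph.degree C' : ℝ) * (f C - f C') ^ 2 ≤
      10 ^ 9 * (n : ℝ) ^ 5 * dirichlet 𝓗.chamberGraph f := by
  set F : (Fin n → Bool) → ℝ := fun σ =>
    if h : 𝓗.Realizable σ then f (𝓗.chamberOf h) else 0 with hF
  have hFf : ∀ C, f C = F (𝓗.side C) := by
    intro C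
    simp only [hF, 𝓗.realizable_side C, dif_pos]
    congr 1
    exact 𝓗.side_injective (by simp)
  have h1 : dirichlet 𝓗.chamberGraph f = ∑ x ∈ 𝓗.darts, flipEnergy F x :=
    hg.sum_adj_eq (fun C C' => (f C - f C') ^ 2) (flipEnergy F) (by
      intro C C' k h
      rw [flipEnergy, hFf C, hFf C', h])
  have h2 : ∑ C, ∑ C', (𝓗.chamberGraph.degree C * 𝓗.chamberGraph.degree C' : ℝ) *
      (f C - f C') ^ 2 = ∑ x ∈ 𝓗.darts, ∑ y ∈ 𝓗.darts, (F x.1 - F y.1) ^ 2 := by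
    rw [← hg.sum_degree_mul_eq (fun C => ∑ y ∈ 𝓗.darts, (F (𝓗.side C) - F y.1) ^ 2)
      (fun σ => ∑ y ∈ 𝓗.darts, (F σ - F y.1) ^ 2) (fun _ => rfl)]
    refine Finset.sum_congr rfl fun C _ => ?_
    rw [← hg.sum_degree_mul_eq (fun C' => (f C - f C') ^ 2) (fun τ => (F (𝓗.side C) - F τ) ^ 2)
      (fun C' => by rw [hFf C, hFf C']), Finset.mul_sum]
    exact Finset.sum_congr rfl fun C' _ => by ring
  rw [h1, h2]
  exact hg.sum_sq_sub_darts_le hn F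

end

end Arrangement

open Classical in
theorem exists_isMixingTime_le {V : Type*} [Fintype V] {G : SimpleGraph V} {ε : ℝ} {s : ℕ}
    (h : ∀ x, tvDist ((lazyWalk G ^ s) x) (stationary G) ≤ ε) :
    ∃ t, IsMixingTime G ε t ∧ t ≤ s := by
  have hex : ∃ s : ℕ, ∀ x, tvDist ((lazyWalk G ^ s) x) (stationary G) ≤ ε := ⟨s, h⟩
  exact ⟨Nat.find hex, ⟨Nat.find_spec hex, fun m hm => Nat.find_min' hex hm⟩, Nat.find_min' hex h⟩

end

/-- For an absolute constant `c > 0`, the lazy simple random walk on the chamber graph of any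
arrangement of `n ≥ 1` hyperplanes in general position in `ℝ³` has, for every `ε ∈ (0, 1)`, a
(finite) `ε`-mixing time, and it is at most `c * n ^ 2 * log (n / ε)`. -/
theorem stmt11 :
    ∃ c : ℝ, 0 < c ∧
      ∀ (n : ℕ) (𝓗 : Arrangement 3 n), 1 ≤ n → 𝓗.GeneralPosition →
        ∀ ε : ℝ, 0 < ε → ε < 1 →
          ∃ t : ℕ, IsMixingTime 𝓗.chamberGraph ε t ∧
            (t : ℝ) ≤ c * (n : ℝ) ^ 2 * Real.log ((n : ℝ) / ε) := by
  classical
  refine ⟨10 ^ 12, by norm_num, ?_⟩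
  intro n 𝓗 hn hg ε hε hε1
  have hn1 : (1 : ℝ) ≤ n := by exact_mod_cast hn
  have hdeg := hg.degree_pos hn
  have hMeq := hg.sum_degree_eq
  rcases lt_or_ge ((n : ℝ) / ε) 2 with hlt | hge
  · rw [div_lt_iff₀ hε] at hlt
    have hn2 : n < 2 := by
      have : (n : ℝ) < 2 := by linarith
      exact_mod_cast this
    obtain rfl : n = 1 := by omega
    have hM : ∑ C, (𝓗.chamberGraph.degree C : ℝ) ≤ 2 := by
      rw [hMeq, hg.card_darts_of_le (by norm_num)]
      norm_num
    obtain ⟨t, ht, ht0⟩ := exists_isMixingTime_le (ε := ε) (s := 0)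
      fun x => (tvDist_lazyWalk_pow_zero_le hdeg hM x).trans (by norm_num at hlt ⊢; linarith)
    refine ⟨t, ht, ?_⟩
    rw [Nat.le_zero.1 ht0]
    have : 0 ≤ Real.log (((1 : ℕ) : ℝ) / ε) :=
      Real.log_nonneg (by rw [le_div_iff₀ hε]; push_cast; linarith)
    push_cast at this ⊢
    positivity
  · set M := ∑ C, (𝓗.chamberGraph.degree C : ℝ) with hM
    set L := Real.log ((n : ℝ) / ε) with hL
    have hMle : M ≤ 24 * (n : ℝ) ^ 3 := by
      rw [hMeq]; exact_mod_cast hg.card_darts_le hn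
    have hMge : (n : ℝ) ^ 3 ≤ 9 * M := by
      rw [hMeq]; exact_mod_cast hg.pow_three_le_card_darts hn
    have hM0 : 0 < M := by nlinarith [pow_pos (by linarith : (0 : ℝ) < n) 3]
    have hL2 : 1 / 2 ≤ L := by
      have h1 : Real.log 2 ≤ L := Real.log_le_log (by norm_num) hge
      have h2 := Real.log_two_gt_d9
      linarith
    have hlog : Real.log (M / ε ^ 2) ≤ 8 * L := by
      rw [hL, show (8 : ℝ) = ((8 : ℕ) : ℝ) by norm_num, ← Real.log_pow]
      refine Real.log_le_log (by positivity) ?_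
      set q := (n : ℝ) / ε with hq
      have hq0 : 0 ≤ q := by linarith
      have h5 : (2 : ℝ) ^ 5 ≤ q ^ 5 := pow_le_pow_left₀ (by norm_num) hge 5
      calc M / ε ^ 2 ≤ 24 * (n : ℝ) ^ 3 / ε ^ 2 := by gcongr
        _ ≤ 24 * (n : ℝ) ^ 3 / ε ^ 3 := by
            refine div_le_div_of_nonneg_left (by positivity) (by positivity) ?_
            exact pow_le_pow_of_le_one hε.le hε1.le (by norm_num)
        _ = 24 * q ^ 3 := by rw [hq, div_pow]; ring
        _ ≤ q ^ 5 * q ^ 3 := by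
            refine mul_le_mul_of_nonneg_right (by linarith) (by positivity)
        _ = q ^ 8 := by ring
    set s := ⌈18 * 10 ^ 9 * (n : ℝ) ^ 2 * (8 * L)⌉₊ with hs
    have hsge : 18 * 10 ^ 9 * (n : ℝ) ^ 2 * (8 * L) ≤ s := Nat.le_ceil _
    have hcond : 2 * (10 ^ 9 * (n : ℝ) ^ 5) * Real.log (M / ε ^ 2) ≤ s * M := by
      calc _ ≤ 2 * (10 ^ 9 * (n : ℝ) ^ 5) * (8 * L) := by gcongr
        _ = 2 * 10 ^ 9 * (n : ℝ) ^ 2 * (8 * L) * (n : ℝ) ^ 3 := by ring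
        _ ≤ 2 * 10 ^ 9 * (n : ℝ) ^ 2 * (8 * L) * (9 * M) := by
            refine mul_le_mul_of_nonneg_left hMge ?_
            have : 0 ≤ L := by linarith
            positivity
        _ = 18 * 10 ^ 9 * (n : ℝ) ^ 2 * (8 * L) * M := by ring
        _ ≤ s * M := mul_le_mul_of_nonneg_right hsge hM0.le
    obtain ⟨t, ht, hts⟩ := exists_isMixingTime_le (ε := ε) (s := s)
      (tvDist_lazyWalk_pow_le_of_le hdeg (by positivity) (hg.poincare hn) hε hcond)
    refine ⟨t, ht, ?_⟩
    have h1 : (t : ℝ) ≤ s := by exact_mod_cast hts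
    have h2 : (s : ℝ) ≤ 18 * 10 ^ 9 * (n : ℝ) ^ 2 * (8 * L) + 1 := by
      refine (Nat.ceil_lt_add_one ?_).le
      have : 0 ≤ L := by linarith
      positivity
    have h3 : 1 / 2 ≤ (n : ℝ) ^ 2 * L := by nlinarith
    nlinarith
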